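/- arXiv:1004.0731 — 2 statements merged into one kernel-verified Lean document; each statement's English description precedes it below -/
import Mathlib

section
/- Let $K$ be a field of characteristic $p > 2$, $f \in K$, and $s \ge 0$. Then the sequence $x_n = (f+n)^{(p^s+1)/2}$ satisfies the Büchi equations $x_n^2 - 2x_{n-1}^2 + x_{n-2}^2 = 2$ for all integers $n$. -/
/-!
Since `x_n ^ 2 = (f + n) ^ (p ^ s + 1)`, the Büchi equation says that the second difference of
`a ↦ a ^ (p ^ s + 1)` is `2`. The Frobenius identity `(a ± 1) ^ p ^ s = a ^ p ^ s ± 1` reduces this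
to the second difference of a product `b * a` when both factors move in unit steps.
-/

section Ring

variable {R : Type*} [Ring R]

theorem add_one_mul_add_one_sub_two_mul_mul_add_sub_one_mul_sub_one (a b : R) :
    (a + 1) * (b + 1) - 2 * (a * b) + (a - 1) * (b - 1) = 2 := by
  rw [← one_add_one_eq_two]
  noncomm_ring

variable (p : ℕ) [ExpChar R p]

theorem add_one_pow_sub_two_mul_pow_add_sub_one_pow_expChar_pow_succ (a : R) (s : ℕ) :
    (a + 1) ^ (p ^ s + 1) - 2 * a ^ (p ^ s + 1) + (a - 1) ^ (p ^ s + 1) = 2 := by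
  have h_add : (a + 1) ^ p ^ s = a ^ p ^ s + 1 := by
    rw [add_pow_expChar_pow_of_commute p s (Commute.one_right a), one_pow]
  have h_sub : (a - 1) ^ p ^ s = a ^ p ^ s - 1 := by
    rw [sub_pow_expChar_pow_of_commute p s (Commute.one_right a), one_pow]
  simp only [pow_succ, h_add, h_sub, add_one_mul_add_one_sub_two_mul_mul_add_sub_one_mul_sub_one]

theorem pasten_sequence_buchi_general (hp : Odd p) (f : R) (s : ℕ) (x : ℤ → R)
    (hx : ∀ n : ℤ, x n = (f + (n : R)) ^ ((p ^ s + 1) / 2)) (n : ℤ) :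
    x n ^ 2 - 2 * x (n - 1) ^ 2 + x (n - 2) ^ 2 = 2 := by
  have h_even : Even (p ^ s + 1) := hp.pow.add_one
  have hx_sq (m : ℤ) : x m ^ 2 = (f + (m : R)) ^ (p ^ s + 1) := by
    rw [hx, ← pow_mul, Nat.div_mul_cancel h_even.two_dvd]
  have h_add : f + (n : R) = f + ((n - 1 : ℤ) : R) + 1 := by push_cast; abel
  have h_sub : f + ((n - 2 : ℤ) : R) = f + ((n - 1 : ℤ) : R) - 1 := by
    push_cast; rw [← one_add_one_eq_two]; abel
  rw [hx_sq, hx_sq, hx_sq, h_add, h_sub,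
    add_one_pow_sub_two_mul_pow_add_sub_one_pow_expChar_pow_succ]

end Ring

/-- Pasten's nontrivial solutions: in characteristic `p > 2` the
sequence `x_n = (f+n)^{(p^s+1)/2}` satisfies the Büchi equations
`x_n^2 - 2 x_{n-1}^2 + x_{n-2}^2 = 2`. -/
theorem pasten_sequence_buchi (K : Type) [Field K]
    (p : ℕ) (hp : p.Prime) [CharP K p] (hodd : 2 < p)
    (f : K) (s : ℕ) (x : ℤ → K)
    (hx : ∀ n : ℤ, x n = (f + (n : K)) ^ ((p ^ s + 1) / 2)) :
    ∀ n : ℤ, x n ^ 2 - 2 * x (n - 1) ^ 2 + x (n - 2) ^ 2 = 2 :=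
  have : ExpChar K p := .prime hp
  pasten_sequence_buchi_general p (hp.odd_of_ne_two hodd.ne') f s x hx
end

section
/- Let $K$ be a function field of genus $g$ over a field of constants $F$ of characteristic $0$, let $r \ge 2$, and let $c_0, \dots, c_{M-1}$ be distinct rational numbers. Suppose $a, \nu \in K$ and $x_0, \dots, x_{M-1} \in K$ with at least one $x_i \notin F$ satisfy $x_n^r = (\nu + c_n)^r - a$ for all $0 \le n \le M-1$. If $M \ge \left(8r + 4 + \frac{3r}{r-1}\right) 3r^2 g + \left(4r + 2 + \frac{2r}{r-1}\right) 3r^2 + 1$, then $a = 0$. -/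
/-- A place of a one-variable function field `K` over its field of constants `F`:
a normalized (`ℤ`-valued, surjective) discrete valuation on `K`, trivial on `F`. -/
structure FFPlace (F K : Type) [Field F] [Field K] [Algebra F K] where
  ord : K → ℤ
  ord_zero : ord 0 = 0
  ord_mul : ∀ x y : K, x ≠ 0 → y ≠ 0 → ord (x * y) = ord x + ord y
  ord_add : ∀ x y : K, x ≠ 0 → y ≠ 0 → x + y ≠ 0 → min (ord x) (ord y) ≤ ord (x + y)
  ord_surj : ∀ n : ℤ, ∃ x : K, x ≠ 0 ∧ ord x = n
  ord_algebraMap : ∀ c : F, c ≠ 0 → ord (algebraMap F K c) = 0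

variable {F K : Type} [Field F] [Field K] [Algebra F K]

theorem FFPlace.ord_one (p : FFPlace F K) : p.ord 1 = 0 := by
  have h := p.ord_mul 1 1 one_ne_zero one_ne_zero
  rw [mul_one] at h; omega

theorem FFPlace.ord_neg (p : FFPlace F K) (x : K) (hx : x ≠ 0) :
    p.ord (-x) = p.ord x := by
  have hm1 : p.ord (-1 : K) = 0 := by
    have h := p.ord_mul (-1) (-1) (by norm_num) (by norm_num)
    rw [neg_mul_neg, one_mul] at h
    rw [p.ord_one] at h; omega
  have h := p.ord_mul (-1) x (by norm_num) hx
  rw [neg_one_mul, hm1, zero_add] at h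
  exact h

/-- The valuation ring of a place. -/
def FFPlace.valRing (p : FFPlace F K) : Subring K where
  carrier := {x : K | x = 0 ∨ 0 ≤ p.ord x}
  zero_mem' := Or.inl rfl
  one_mem' := Or.inr (le_of_eq p.ord_one.symm)
  add_mem' := by
    rintro a b (rfl | ha) (rfl | hb)
    · simpa using Or.inl rfl
    · simpa using Or.inr hb
    · simpa using Or.inr ha
    · by_cases h0 : a = 0
      · subst h0; simpa using Or.inr hb
      by_cases h0' : b = 0
      · subst h0'; simpa using Or.inr ha
      by_cases hab : a + b = 0
      · exact Or.inl hab
      · exact Or.inr (le_trans (le_min ha hb) (p.ord_add a b h0 h0' hab))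
  mul_mem' := by
    rintro a b (rfl | ha) (rfl | hb)
    · simpa using Or.inl rfl
    · simpa using Or.inl rfl
    · simpa using Or.inl rfl
    · by_cases h0 : a = 0
      · subst h0; simpa using Or.inl rfl
      by_cases h0' : b = 0
      · subst h0'; simpa using Or.inl rfl
      · exact Or.inr (by rw [p.ord_mul a b h0 h0']; exact add_nonneg ha hb)
  neg_mem' := by
    rintro a (rfl | ha)
    · simpa using Or.inl rfl
    · by_cases h0 : a = 0
      · subst h0; simpa using Or.inl rfl
      · exact Or.inr (by rw [p.ord_neg a h0]; exact ha)

/-- The maximal ideal of the valuation ring of a place. -/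
def FFPlace.maxIdeal (p : FFPlace F K) : Ideal p.valRing where
  carrier := {x : p.valRing | (x : K) = 0 ∨ 1 ≤ p.ord x}
  zero_mem' := Or.inl rfl
  add_mem' := by
    rintro ⟨a, hamem⟩ ⟨b, hbmem⟩ (ha | ha) (hb | hb) <;>
      simp only [Set.mem_setOf_eq, Subring.coe_add] at *
    · subst ha; subst hb; simp
    · subst ha; simpa using Or.inr hb
    · subst hb; simpa using Or.inr ha
    · by_cases h0 : a = 0
      · subst h0; simpa using Or.inr hb
      by_cases h0' : b = 0
      · subst h0'; simpa using Or.inr ha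
      by_cases hab : a + b = 0
      · exact Or.inl hab
      · exact Or.inr (le_trans (le_min ha hb) (p.ord_add a b h0 h0' hab))
  smul_mem' := by
    rintro ⟨c, hcmem⟩ ⟨a, hamem⟩ (ha | ha) <;>
      simp only [Set.mem_setOf_eq, smul_eq_mul, Subring.coe_mul] at *
    · subst ha; simp
    · by_cases h0 : c = 0
      · subst h0; simp
      by_cases h0' : a = 0
      · subst h0'; simp
      · refine Or.inr ?_
        rw [p.ord_mul c a h0 h0']
        rcases hcmem with rfl | hc
        · exact absurd rfl h0
        · omega

noncomputable instance (p : FFPlace F K) : Algebra F p.valRing :=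
  RingHom.toAlgebra (RingHom.codRestrict (algebraMap F K) p.valRing (by
    intro c
    by_cases hc : c = 0
    · exact Or.inl (by simp [hc])
    · exact Or.inr (le_of_eq (p.ord_algebraMap c hc).symm)))

/-- The degree of a place: the dimension over `F` of its residue field. -/
noncomputable def FFPlace.deg (p : FFPlace F K) : ℕ :=
  Module.finrank F (p.valRing ⧸ p.maxIdeal)

/-- The degree of a divisor (a finitely supported `ℤ`-valued function on places). -/
noncomputable def divDeg (A : FFPlace F K →₀ ℤ) : ℤ :=
  A.sum fun p n => n * p.deg

/-- The Riemann–Roch space `L(A)` of a divisor `A`. -/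
def RRspace (A : FFPlace F K →₀ ℤ) : Submodule F K where
  carrier := {f : K | f = 0 ∨ ∀ p : FFPlace F K, -(A p) ≤ p.ord f}
  zero_mem' := Or.inl rfl
  add_mem' := by
    rintro a b (rfl | ha) (rfl | hb)
    · simpa using Or.inl rfl
    · simpa using Or.inr hb
    · simpa using Or.inr ha
    · by_cases h0 : a = 0
      · subst h0; simpa using Or.inr hb
      by_cases h0' : b = 0
      · subst h0'; simpa using Or.inr ha
      by_cases hab : a + b = 0
      · exact Or.inl hab
      · refine Or.inr fun p => le_trans (le_min (ha p) (hb p))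
          (p.ord_add a b h0 h0' hab)
  smul_mem' := by
    rintro c a (rfl | ha)
    · simpa using Or.inl rfl
    · by_cases hc : c = 0
      · subst hc; simpa using Or.inl rfl
      by_cases h0 : a = 0
      · subst h0; simpa using Or.inl rfl
      · refine Or.inr fun p => ?_
        have hca : (algebraMap F K c) ≠ 0 :=
          fun h => hc ((algebraMap F K).injective (by simpa using h))
        show -(A p) ≤ p.ord (c • a)
        rw [Algebra.smul_def, p.ord_mul _ a hca h0, p.ord_algebraMap c hc, zero_add]
        exact ha p

/-- `ℓ(A)`, the dimension over `F` of the Riemann–Roch space of `A`. -/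
noncomputable def ellDim (A : FFPlace F K →₀ ℤ) : ℕ :=
  Module.finrank F (RRspace A)

/-- `K` is a function field (of one variable) over `F`. -/
def IsFunctionField (F K : Type) [Field F] [Field K] [Algebra F K] : Prop :=
  ∃ t : K, Transcendental F t ∧
    FiniteDimensional (IntermediateField.adjoin F {t}) K

/-- `F` is the exact field of constants of `K`. -/
def IsConstantField (F K : Type) [Field F] [Field K] [Algebra F K] : Prop :=
  ∀ z : K, IsAlgebraic F z → z ∈ (algebraMap F K).range

/-- `K/F` has genus `g`: `g` is the largest value of `deg A - ℓ(A) + 1`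
over all divisors `A` of `K`. -/
def IsGenus (F K : Type) [Field F] [Field K] [Algebra F K] (g : ℕ) : Prop :=
  IsGreatest {n : ℤ | ∃ A : FFPlace F K →₀ ℤ, n = divDeg A - ellDim A + 1} g

/-!
Put `y n = (ν + c n) ^ r - a` and suppose `a ≠ 0`. There is a derivation `D ≠ 0` of `K / F` whose
dual differential has degree at most `2 g - 2`. Eliminating the constant `c` from `a = (ν + c) ^ r`
and its derivative gives the expression `r ^ r a ^ (r - 1) (D ν) ^ r - (D a) ^ r`, and at a zero of
`y n` of order `i` it vanishes to order about `i - 1`. If this expression is identically zero, then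
`a` is the `r`-th power of some `ν + κ` and `(D ν) ^ r` serves the same purpose. So one fixed
nonzero function `G`, of degree controlled by `g` and the height of `(ν, a)`, bounds the zeros of
all `y n`.

Let `H` be the height. If `m` of the `y n` are nonzero, their poles have total degree at least
`(m - 1) H / 2`, because at each place at most one of them has an exceptionally small pole. Their
zeros have total degree at most a constant times `g + H`: at most `r` of the `y n` vanish at a given
place, and as `r`-th powers they vanish there to order at least `2`, so `i ≤ 2 (i - 1)`.
Comparing zeros and poles bounds `m`. Finally at most `r` of the `y n` are zero.

Since the genus is given by Riemann's inequality, the bound `2 g - 2` on the degree of `dt` is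
obtained from the trace form of `K / F(t)`, for which suitable Riemann–Roch spaces are orthogonal.
-/

open Polynomial
open scoped IntermediateField IntermediateField.algebraAdjoinAdjoin

namespace FFPlace

/-- `p.OrdGE x i` says that `x` vanishes to order at least `i` at `p`. Unlike `i ≤ p.ord x` it
always holds for `x = 0`, where `p.ord` takes the junk value `0`. -/
def OrdGE (p : FFPlace F K) (x : K) (i : ℤ) : Prop := x = 0 ∨ i ≤ p.ord x

variable {p : FFPlace F K} {x y : K} {i j : ℤ}

theorem ne_zero_of_ord_ne_zero (h : p.ord x ≠ 0) : x ≠ 0 := fun h0 => h (h0 ▸ p.ord_zero)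

theorem ord_inv (p : FFPlace F K) (x : K) : p.ord x⁻¹ = -p.ord x := by
  by_cases h0 : x = 0
  · simp [h0, p.ord_zero]
  · have h := p.ord_mul x x⁻¹ h0 (inv_ne_zero h0)
    rw [mul_inv_cancel₀ h0, p.ord_one] at h
    omega

theorem ord_pow (p : FFPlace F K) (x : K) (n : ℕ) : p.ord (x ^ n) = n * p.ord x := by
  by_cases h0 : x = 0
  · rcases n with _ | n
    · simp [p.ord_one]
    · simp [h0, p.ord_zero]
  · induction n with
    | zero => simp [p.ord_one]
    | succ n ih => rw [pow_succ, p.ord_mul _ _ (pow_ne_zero _ h0) h0, ih]; push_cast; ring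

theorem ord_zpow (p : FFPlace F K) (x : K) (n : ℤ) : p.ord (x ^ n) = n * p.ord x := by
  cases n with
  | ofNat n => simp [ord_pow]
  | negSucc n => rw [zpow_negSucc, ord_inv, ord_pow, Int.negSucc_eq]; push_cast; ring

namespace OrdGE

theorem zero (p : FFPlace F K) (i : ℤ) : p.OrdGE 0 i := Or.inl rfl

theorem of_le (h : i ≤ p.ord x) : p.OrdGE x i := Or.inr h

theorem rfl_ord (p : FFPlace F K) (x : K) : p.OrdGE x (p.ord x) := of_le le_rfl

theorem le_ord (h : p.OrdGE x i) (hx : x ≠ 0) : i ≤ p.ord x := h.resolve_left hx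

theorem mono (h : p.OrdGE x i) (hij : j ≤ i) : p.OrdGE x j := h.imp_right hij.trans

theorem add (hx : p.OrdGE x i) (hy : p.OrdGE y i) : p.OrdGE (x + y) i := by
  by_cases h0 : x = 0
  · simpa [h0] using hy
  by_cases h1 : y = 0
  · simpa [h1] using hx
  by_cases h2 : x + y = 0
  · exact Or.inl h2
  · exact of_le ((le_min (hx.le_ord h0) (hy.le_ord h1)).trans (p.ord_add x y h0 h1 h2))

theorem neg (hx : p.OrdGE x i) : p.OrdGE (-x) i := by
  by_cases h0 : x = 0
  · simpa [h0] using hx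
  · exact of_le (by rw [p.ord_neg x h0]; exact hx.le_ord h0)

theorem sub (hx : p.OrdGE x i) (hy : p.OrdGE y i) : p.OrdGE (x - y) i := by
  rw [sub_eq_add_neg]; exact hx.add hy.neg

theorem mul (hx : p.OrdGE x i) (hy : p.OrdGE y j) : p.OrdGE (x * y) (i + j) := by
  by_cases h0 : x = 0
  · exact Or.inl (by simp [h0])
  by_cases h1 : y = 0
  · exact Or.inl (by simp [h1])
  · exact of_le (by rw [p.ord_mul x y h0 h1]; exact add_le_add (hx.le_ord h0) (hy.le_ord h1))

theorem one (p : FFPlace F K) : p.OrdGE 1 0 := of_le p.ord_one.ge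

theorem algebraMap (p : FFPlace F K) (c : F) : p.OrdGE (algebraMap F K c) 0 := by
  by_cases hc : c = 0
  · exact Or.inl (by simp [hc])
  · exact of_le (p.ord_algebraMap c hc).ge

theorem natCast (p : FFPlace F K) (n : ℕ) : p.OrdGE (n : K) 0 := by
  simpa using algebraMap p (n : F)

theorem pow (hx : p.OrdGE x i) (n : ℕ) : p.OrdGE (x ^ n) (n * i) := by
  induction n with
  | zero => simpa using one p
  | succ n ih =>
    rw [pow_succ]
    exact (ih.mul hx).mono (by push_cast; linarith)

theorem sum {ι : Type*} {s : Finset ι} {f : ι → K} (h : ∀ k ∈ s, p.OrdGE (f k) i) :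
    p.OrdGE (∑ k ∈ s, f k) i :=
  Finset.sum_induction f (p.OrdGE · i) (fun _ _ => add) (zero p i) h

theorem aeval (hx : p.OrdGE x 0) (q : F[X]) : p.OrdGE (Polynomial.aeval x q) 0 := by
  rw [aeval_eq_sum_range]
  refine sum fun k _ => ?_
  rw [Algebra.smul_def]
  simpa using (algebraMap p _).mul (hx.pow k)

theorem aeval_sub_coeff_zero (hx : p.OrdGE x 1) (q : F[X]) :
    p.OrdGE (Polynomial.aeval x q - Algebra.algebraMap F K (q.coeff 0)) 1 := by
  have hsplit : Polynomial.aeval x q - Algebra.algebraMap F K (q.coeff 0)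
      = x * Polynomial.aeval x q.divX := by
    have h := congrArg (Polynomial.aeval x) (divX_mul_X_add q)
    rw [map_add, map_mul, aeval_X, aeval_C] at h
    rw [← h]
    ring
  rw [hsplit]
  simpa using hx.mul ((hx.mono zero_le_one).aeval q.divX)

end OrdGE

theorem ordGE_iff (hx : x ≠ 0) : p.OrdGE x i ↔ i ≤ p.ord x :=
  ⟨fun h => h.le_ord hx, .of_le⟩

theorem not_ordGE_iff : ¬ p.OrdGE x i ↔ x ≠ 0 ∧ p.ord x < i := by
  rw [OrdGE, not_or, not_le]

theorem not_ordGE_one_one (p : FFPlace F K) : ¬ p.OrdGE 1 1 := by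
  simp [not_ordGE_iff, p.ord_one]

theorem ordGE_one_or_of_mul (h : p.OrdGE (x * y) 1) : p.OrdGE x 1 ∨ p.OrdGE y 1 := by
  by_contra! hxy
  obtain ⟨⟨hx, hx'⟩, hy, hy'⟩ := hxy.imp not_ordGE_iff.1 not_ordGE_iff.1
  rw [ordGE_iff (mul_ne_zero hx hy), p.ord_mul _ _ hx hy] at h
  omega

theorem ord_add_eq_of_lt (hx : x ≠ 0) (hy : p.OrdGE y (p.ord x + 1)) :
    x + y ≠ 0 ∧ p.ord (x + y) = p.ord x := by
  have hlt : ¬ p.OrdGE (x + y) (p.ord x + 1) := fun h => by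
    have := (h.sub hy).le_ord (by simpa using hx)
    rw [add_sub_cancel_right] at this
    omega
  obtain ⟨hne, hlt⟩ := not_ordGE_iff.1 hlt
  exact ⟨hne, le_antisymm (by omega)
    (((OrdGE.rfl_ord p x).add (hy.mono (by omega))).le_ord hne)⟩

theorem ord_aeval_of_neg (hx : p.ord x < 0) {q : F[X]} (hq : q ≠ 0) :
    aeval x q ≠ 0 ∧ p.ord (aeval x q) = q.natDegree * p.ord x := by
  have hx0 : x ≠ 0 := ne_zero_of_ord_ne_zero hx.ne
  have hlc : algebraMap F K q.leadingCoeff ≠ 0 := by simpa using hq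
  have hlead : p.ord (algebraMap F K q.leadingCoeff * x ^ q.natDegree)
      = q.natDegree * p.ord x := by
    rw [p.ord_mul _ _ hlc (pow_ne_zero _ hx0), p.ord_algebraMap _ (by simpa using hq), p.ord_pow,
      zero_add]
  have hsplit : aeval x q = algebraMap F K q.leadingCoeff * x ^ q.natDegree
      + ∑ k ∈ Finset.range q.natDegree, q.coeff k • x ^ k := by
    rw [aeval_eq_sum_range, Finset.sum_range_succ, add_comm, Algebra.smul_def]
    rfl
  rw [hsplit, ← hlead]
  refine ord_add_eq_of_lt (mul_ne_zero hlc (pow_ne_zero _ hx0)) ?_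
  rw [hlead]
  refine OrdGE.sum fun k hk => ?_
  rw [Algebra.smul_def]
  refine ((OrdGE.algebraMap p _).mul ((OrdGE.rfl_ord p x).pow k)).mono ?_
  have : (k : ℤ) + 1 ≤ q.natDegree := by exact_mod_cast Finset.mem_range.1 hk
  nlinarith

theorem transcendental_of_ord_ne_zero (hx : p.ord x ≠ 0) : Transcendental F x := by
  have no_pole : ∀ y : K, IsAlgebraic F y → ¬ p.ord y < 0 := by
    rintro y ⟨q, hq0, hq⟩ hneg
    exact (ord_aeval_of_neg hneg hq0).1 hq
  intro halg
  rcases lt_or_gt_of_ne hx with h | h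
  · exact no_pole x halg h
  · exact no_pole x⁻¹ halg.inv (by rw [ord_inv]; omega)

theorem ext_of_ordGE_zero {p p' : FFPlace F K} (h : ∀ y, p.OrdGE y 0 ↔ p'.OrdGE y 0) :
    p = p' := by
  obtain ⟨z, hz0, hz⟩ := p.ord_surj 1
  have ord_unit : ∀ y, y ≠ 0 → p.ord y = 0 → p'.ord y = 0 := by
    intro y hy hy0
    have hnn := ((h y).1 (.of_le hy0.ge)).le_ord hy
    have hnn_inv := ((h y⁻¹).1 (.of_le (by rw [ord_inv]; omega))).le_ord (inv_ne_zero hy)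
    rw [ord_inv] at hnn_inv
    omega
  have ord_mul_ord : ∀ y, y ≠ 0 → p'.ord y = p.ord y * p'.ord z := by
    intro y hy
    have hzpow : z ^ (-p.ord y) ≠ 0 := zpow_ne_zero _ hz0
    have hunit := ord_unit _ (mul_ne_zero hy hzpow) (by
      rw [p.ord_mul _ _ hy hzpow, ord_zpow, hz]; ring)
    rw [p'.ord_mul _ _ hy hzpow, ord_zpow] at hunit
    linarith
  have hz' : p'.ord z = 1 := by
    obtain ⟨u, hu0, hu⟩ := p'.ord_surj 1
    rw [ord_mul_ord u hu0] at hu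
    exact Int.eq_one_of_mul_eq_one_left (((h z).1 (.of_le (by omega))).le_ord hz0) hu
  have hord : p.ord = p'.ord := by
    funext y
    by_cases hy : y = 0
    · rw [hy, p.ord_zero, p'.ord_zero]
    · rw [ord_mul_ord y hy, hz', mul_one]
  cases p
  cases p'
  congr

end FFPlace

instance charZero_adjoin_singleton [CharZero F] (z : K) : CharZero F⟮z⟯ :=
  charZero_of_injective_algebraMap (algebraMap F F⟮z⟯).injective

theorem exists_aeval_eq_of_mem_adjoin {z u : K} (hu : u ∈ Algebra.adjoin F {z}) :
    ∃ q : F[X], aeval z q = u := by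
  rwa [Algebra.adjoin_singleton_eq_range_aeval] at hu

instance isPrincipalIdealRing_adjoin_singleton (z : K) :
    IsPrincipalIdealRing (Algebra.adjoin F {z}) := by
  refine IsPrincipalIdealRing.of_surjective
    ((aeval z).codRestrict (Algebra.adjoin F {z}) fun _ => aeval_mem_adjoin_singleton F z) ?_
  rintro ⟨u, hu⟩
  obtain ⟨q, hq⟩ := exists_aeval_eq_of_mem_adjoin hu
  exact ⟨q, Subtype.ext hq⟩

namespace IsFunctionField

theorem essFiniteType (hff : IsFunctionField F K) : Algebra.EssFiniteType F K := by
  obtain ⟨t, -, _⟩ := hff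
  have : Algebra.EssFiniteType F F⟮t⟯ := IntermediateField.essFiniteType_iff.2 ⟨{t}, by simp⟩
  exact Algebra.EssFiniteType.comp F F⟮t⟯ K

theorem exists_isTranscendenceBasis (hff : IsFunctionField F K) :
    ∃ t : K, IsTranscendenceBasis F (fun _ : Unit => t) := by
  obtain ⟨t, ht, _⟩ := hff
  have : Algebra.IsAlgebraic (Algebra.adjoin F {t}) K :=
    (IsFractionRing.comap_isAlgebraic_iff (K := F⟮t⟯)).2 inferInstance
  refine ⟨t, isTranscendenceBasis_iff_algebraicIndependent_isAlgebraic.2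
    ⟨algebraicIndependent_unique_type_iff.2 ht, ?_⟩⟩
  rwa [Set.range_const]

theorem finiteDimensional_adjoin (hff : IsFunctionField F K) {z : K} (hz : Transcendental F z) :
    FiniteDimensional F⟮z⟯ K := by
  obtain ⟨t, ht⟩ := hff.exists_isTranscendenceBasis
  have hind : AlgebraicIndependent F (fun _ : Unit => z) :=
    algebraicIndependent_unique_type_iff.2 hz
  have hbasis : IsTranscendenceBasis F (fun _ : Unit => z) :=
    hind.isTranscendenceBasis_of_trdeg_le_of_finite ht.cardinalMk_eq_trdeg.symm.le
  have halg := hbasis.isAlgebraic_field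
  rw [Set.range_const] at halg
  have := hff.essFiniteType
  have : Algebra.EssFiniteType F⟮z⟯ K := .of_comp F _ _
  exact Algebra.finite_of_essFiniteType_of_isAlgebraic

end IsFunctionField

section LinearIndependence

variable {z : K} {ι : Type*} [Fintype ι] {w : ι → K}

theorem eq_zero_of_forall_coeff_zero (hz : z ≠ 0)
    (h : ∀ q : ι → F[X], ∑ i, aeval z (q i) * w i = 0 → ∀ i, (q i).coeff 0 = 0)
    {q : ι → F[X]} (hq : ∑ i, aeval z (q i) * w i = 0) (i : ι) : q i = 0 := by
  have X_pow_dvd : ∀ n : ℕ, ∀ q : ι → F[X], ∑ i, aeval z (q i) * w i = 0 → ∀ i, X ^ n ∣ q i := by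
    intro n
    induction n with
    | zero => simp
    | succ n ih =>
      intro q hq i
      choose q' hq' using fun i => X_dvd_iff.2 (h q hq i)
      have hrel : z * ∑ i, aeval z (q' i) * w i = 0 := by
        rw [← hq, Finset.mul_sum]
        exact Finset.sum_congr rfl fun i _ => by rw [hq' i, map_mul, aeval_X, mul_assoc]
      rw [hq' i, pow_succ']
      exact mul_dvd_mul_left _ (ih q' ((mul_eq_zero.1 hrel).resolve_left hz) i)
  by_contra h0
  have hdeg := natDegree_le_of_dvd (X_pow_dvd ((q i).natDegree + 1) q hq i) h0
  rw [natDegree_X_pow] at hdeg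
  omega

theorem linearIndependent_adjoin_of_coeff_zero (hz : z ≠ 0)
    (h : ∀ q : ι → F[X], ∑ i, aeval z (q i) * w i = 0 → ∀ i, (q i).coeff 0 = 0) :
    LinearIndependent F⟮z⟯ w := by
  rw [← LinearIndependent.iff_fractionRing (R := Algebra.adjoin F {z}) (K := F⟮z⟯),
    Fintype.linearIndependent_iff]
  intro c hc i
  choose q hq using fun i => exists_aeval_eq_of_mem_adjoin (c i).2
  have hrel : ∑ i, aeval z (q i) * w i = 0 := by
    rw [← hc]
    exact Finset.sum_congr rfl fun i _ => by rw [hq, Algebra.smul_def]; rfl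
  apply Subtype.ext
  rw [← hq, eq_zero_of_forall_coeff_zero hz h hrel i, map_zero, ZeroMemClass.coe_zero]

end LinearIndependence

namespace FFPlace

variable {p : FFPlace F K}

theorem mem_maxIdeal {x : p.valRing} : x ∈ p.maxIdeal ↔ p.OrdGE (x : K) 1 := Iff.rfl

theorem mk_sum_algebraMap_mul {ι : Type*} (s : Finset ι) (c : ι → F) (w : ι → p.valRing) :
    Ideal.Quotient.mk p.maxIdeal (∑ i ∈ s, algebraMap F p.valRing (c i) * w i)
      = ∑ i ∈ s, c i • Ideal.Quotient.mk p.maxIdeal (w i) := by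
  rw [map_sum]
  exact Finset.sum_congr rfl fun i _ => by rw [map_mul, Algebra.smul_def]; rfl

theorem finite_residueField (hff : IsFunctionField F K) (p : FFPlace F K) :
    Module.Finite F (p.valRing ⧸ p.maxIdeal) := by
  obtain ⟨z, hz0, hz⟩ := p.ord_surj 1
  have := hff.finiteDimensional_adjoin (transcendental_of_ord_ne_zero (p := p) (x := z) (by omega))
  rw [← Module.rank_lt_aleph0_iff]
  refine lt_of_le_of_lt (rank_le (n := Module.finrank F⟮z⟯ K) fun s hs => ?_)
    Cardinal.natCast_lt_aleph0
  choose w hw using fun a : s => Ideal.Quotient.mk_surjective (a : p.valRing ⧸ p.maxIdeal)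
  have hli : LinearIndependent F⟮z⟯ fun a : s => (w a : K) := by
    refine linearIndependent_adjoin_of_coeff_zero hz0 fun q hq => ?_
    have hsum : p.OrdGE (∑ a, algebraMap F K ((q a).coeff 0) * (w a : K)) 1 := by
      have heq : ∑ a, algebraMap F K ((q a).coeff 0) * (w a : K)
          = ∑ a, -(aeval z (q a) - algebraMap F K ((q a).coeff 0)) * (w a : K) := by
        rw [← sub_eq_zero, ← Finset.sum_sub_distrib, ← hq]
        exact Finset.sum_congr rfl fun a _ => by ring
      rw [heq]
      refine OrdGE.sum fun a _ => ?_
      simpa using ((OrdGE.of_le hz.ge).aeval_sub_coeff_zero (q a)).neg.mul (w a).2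
    refine Fintype.linearIndependent_iff.1 hs _ ?_
    have hmk := mk_sum_algebraMap_mul Finset.univ (fun a => (q a).coeff 0) w
    simp only [hw] at hmk
    rw [← hmk, Ideal.Quotient.eq_zero_iff_mem, mem_maxIdeal, AddSubmonoidClass.coe_finsetSum]
    exact hsum
  simpa using hli.fintype_card_le_finrank

theorem deg_pos (hff : IsFunctionField F K) (p : FFPlace F K) : 0 < p.deg := by
  have := finite_residueField hff p
  have : Nontrivial (p.valRing ⧸ p.maxIdeal) := Ideal.Quotient.nontrivial_iff.2
    fun h => p.not_ordGE_one_one (mem_maxIdeal.1 (h ▸ Submodule.mem_top : (1 : p.valRing) ∈ _))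
  exact Module.finrank_pos

end FFPlace

/-- The integral closure of `F[z]` in `K`: the ring of functions all of whose poles are poles
of `z`. -/
abbrev integralFunctions (F : Type) {K : Type} [Field F] [Field K] [Algebra F K] (z : K) :
    Subalgebra (Algebra.adjoin F {z}) K :=
  integralClosure (Algebra.adjoin F {z}) K

section IntegralFunctions

variable {z : K} [FiniteDimensional F⟮z⟯ K]

instance isFractionRing_integralFunctions : IsFractionRing (integralFunctions F z) K :=
  integralClosure.isFractionRing_of_finite_extension (A := Algebra.adjoin F {z}) F⟮z⟯ K

theorem exists_integral_fraction {y : K} (hy : y ≠ 0) :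
    ∃ s u : integralFunctions F z, s ≠ 0 ∧ u ≠ 0 ∧ y * u = s := by
  obtain ⟨s, u, hu, rfl⟩ := IsFractionRing.div_surjective (A := integralFunctions F z) y
  refine ⟨s, u, ?_, nonZeroDivisors.ne_zero hu, div_mul_cancel₀ _ ?_⟩
  · rintro rfl
    simp at hy
  · simpa using nonZeroDivisors.ne_zero hu

variable [CharZero F]

instance isDedekindDomain_integralFunctions : IsDedekindDomain (integralFunctions F z) :=
  integralClosure.isDedekindDomain (Algebra.adjoin F {z}) F⟮z⟯ K

instance finite_integralFunctions :
    Module.Finite (Algebra.adjoin F {z}) (integralFunctions F z) :=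
  IsIntegralClosure.finite (Algebra.adjoin F {z}) F⟮z⟯ K (integralFunctions F z)

end IntegralFunctions

namespace FFPlace

variable {p : FFPlace F K} {x y z : K}

theorem OrdGE.of_mem_adjoin (hz : p.OrdGE z 0) (hy : y ∈ Algebra.adjoin F {z}) :
    p.OrdGE y 0 := by
  obtain ⟨q, rfl⟩ := exists_aeval_eq_of_mem_adjoin hy
  exact hz.aeval q

/-- The valuation ring of a place as a `ValuationSubring`, which makes Mathlib's results on
valuation rings available for it. -/
def valuationSubring (p : FFPlace F K) : ValuationSubring K where
  __ := p.valRing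
  mem_or_inv_mem' x := by
    change p.OrdGE x 0 ∨ p.OrdGE x⁻¹ 0
    rcases le_total 0 (p.ord x) with h | h
    · exact Or.inl (.of_le h)
    · exact Or.inr (.of_le (by rw [ord_inv]; omega))

theorem OrdGE.of_isIntegral (hz : p.OrdGE z 0) (hy : IsIntegral (Algebra.adjoin F {z}) y) :
    p.OrdGE y 0 := by
  let f : Algebra.adjoin F {z} →+* p.valuationSubring :=
    (Algebra.algebraMap (Algebra.adjoin F {z}) K).codRestrict p.valuationSubring.toSubring
      fun u => of_mem_adjoin hz u.2
  have hint : IsIntegral p.valuationSubring y := by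
    obtain ⟨q, hq, hroot⟩ := hy
    refine ⟨q.map f, hq.map f, ?_⟩
    rw [eval₂_map]
    exact hroot
  obtain ⟨v, rfl⟩ := IsIntegrallyClosed.isIntegral_iff.1 hint
  exact v.2

section AdicPlace

open IsDedekindDomain WithZero

variable {R : Type*} [CommRing R] [IsDedekindDomain R] [Algebra R K] [IsFractionRing R K]
  (v : HeightOneSpectrum R) (hv : ∀ c : F, c ≠ 0 → v.valuation K (algebraMap F K c) = 1)

/-- The place of `K` given by a maximal ideal of a Dedekind domain with field of fractions `K`. -/
noncomputable def ofHeightOne : FFPlace F K where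
  ord x := -log (v.valuation K x)
  ord_zero := by simp
  ord_mul x y hx hy := by
    rw [map_mul, log_mul ((Valuation.ne_zero_iff _).2 hx) ((Valuation.ne_zero_iff _).2 hy)]
    ring
  ord_add x y hx hy hxy := by
    have hx' := (Valuation.ne_zero_iff (v.valuation K)).2 hx
    have hy' := (Valuation.ne_zero_iff (v.valuation K)).2 hy
    have hxy' := (Valuation.ne_zero_iff (v.valuation K)).2 hxy
    rcases le_max_iff.1 ((v.valuation K).map_add x y) with h | h
    · have := (log_le_log hxy' hx').2 h
      exact (min_le_left _ _).trans (by omega)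
    · have := (log_le_log hxy' hy').2 h
      exact (min_le_right _ _).trans (by omega)
  ord_surj n := by
    obtain ⟨x, hx⟩ := v.valuation_surjective K (exp (-n))
    refine ⟨x, ?_, by rw [hx]; simp⟩
    rintro rfl
    rw [map_zero] at hx
    exact exp_ne_zero hx.symm
  ord_algebraMap c hc := by rw [hv c hc]; simp

theorem ofHeightOne_ordGE_zero (x : K) :
    (ofHeightOne v hv).OrdGE x 0 ↔ v.valuation K x ≤ 1 := by
  by_cases hx : x = 0
  · simp [hx, OrdGE]
  · rw [ordGE_iff hx, ← exp_zero, ← log_le_iff_le_exp ((Valuation.ne_zero_iff _).2 hx)]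
    exact neg_nonneg

end AdicPlace

theorem ordGE_coe (hz : p.OrdGE z 0) (u : integralFunctions F z) : p.OrdGE (u : K) 0 :=
  .of_isIntegral hz u.2

/-- The ideal of the functions in the integral closure of `F[z]` that vanish at `p`. -/
def centerIdeal (hz : p.OrdGE z 0) : Ideal (integralFunctions F z) where
  carrier := {u | p.OrdGE (u : K) 1}
  zero_mem' := .zero p 1
  add_mem' := .add
  smul_mem' c u hu := by simpa using (ordGE_coe hz c).mul hu

theorem centerIdeal_isPrime (hz : p.OrdGE z 0) : (centerIdeal hz).IsPrime := by
  refine ⟨fun h => p.not_ordGE_one_one ?_, fun {a b} hab => ?_⟩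
  · exact (h ▸ Submodule.mem_top : (1 : integralFunctions F z) ∈ centerIdeal hz)
  · exact ordGE_one_or_of_mul (x := (a : K)) (y := b) hab

variable [FiniteDimensional F⟮z⟯ K]

theorem centerIdeal_ne_bot (hz : p.OrdGE z 0) :
    centerIdeal hz ≠ ⊥ := by
  obtain ⟨π, hπ0, hπ⟩ := p.ord_surj 1
  obtain ⟨s, u, hs0, -, hs⟩ := exists_integral_fraction (F := F) (z := z) hπ0
  have hs1 : s ∈ centerIdeal hz := by
    change p.OrdGE (s : K) 1
    rw [← hs]
    exact (OrdGE.of_le hπ.ge).mul (ordGE_coe hz u)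
  exact fun hbot => hs0 (by simpa [hbot] using hs1)

/-- The center of the place `p` on the integral closure of `F[z]`, for `z` regular at `p`. -/
noncomputable def center (hz : p.OrdGE z 0) :
    IsDedekindDomain.HeightOneSpectrum (integralFunctions F z) :=
  ⟨centerIdeal hz, centerIdeal_isPrime hz, centerIdeal_ne_bot hz⟩

theorem mem_center (hz : p.OrdGE z 0) {u : integralFunctions F z} :
    u ∈ (center hz).asIdeal ↔ p.OrdGE (u : K) 1 := Iff.rfl

theorem notMem_center (hz : p.OrdGE z 0) {u : integralFunctions F z} :
    u ∉ (center hz).asIdeal ↔ (u : K) ≠ 0 ∧ p.ord (u : K) = 0 := by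
  rw [mem_center, not_ordGE_iff]
  refine and_congr_right fun hu => ?_
  have := (ordGE_coe hz u).le_ord hu
  omega

variable [CharZero F]

theorem isIntegral_of_ordGE (h : ∀ p : FFPlace F K, p.OrdGE z 0 → p.OrdGE y 0) :
    IsIntegral (Algebra.adjoin F {z}) y := by
  suffices y ∈ Set.range (algebraMap (integralFunctions F z) K) by
    obtain ⟨u, rfl⟩ := this
    exact u.2
  refine IsDedekindDomain.HeightOneSpectrum.mem_integers_of_valuation_le_one K y fun v => ?_
  have le_one : ∀ u : K, IsIntegral (Algebra.adjoin F {z}) u → v.valuation K u ≤ 1 :=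
    fun u hu => v.valuation_le_one (K := K) ⟨u, hu⟩
  have const_le_one : ∀ c : F, v.valuation K (algebraMap F K c) ≤ 1 := fun c =>
    le_one _ (isIntegral_algebraMap (x := algebraMap F (Algebra.adjoin F {z}) c))
  have const_eq_one : ∀ c : F, c ≠ 0 → v.valuation K (algebraMap F K c) = 1 := by
    intro c hc
    have hinv := const_le_one c⁻¹
    rw [map_inv₀, map_inv₀] at hinv
    have h0 : v.valuation K (algebraMap F K c) ≠ 0 := by
      rw [Valuation.ne_zero_iff]
      simpa using hc
    exact le_antisymm (const_le_one c) ((inv_le_one₀ (zero_lt_iff.2 h0)).1 hinv)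
  have hz : (ofHeightOne v const_eq_one).OrdGE z 0 :=
    (ofHeightOne_ordGE_zero ..).2 (le_one z (isIntegral_algebraMap
      (x := (⟨z, Algebra.self_mem_adjoin_singleton F z⟩ : Algebra.adjoin F {z}))))
  exact (ofHeightOne_ordGE_zero ..).1 (h _ hz)

theorem ordGE_zero_iff_exists_notMem_center (hz : p.OrdGE z 0) :
    p.OrdGE y 0 ↔ ∃ s u : integralFunctions F z, u ∉ (center hz).asIdeal ∧ y * u = s := by
  constructor
  · intro hy
    obtain ⟨n, d, h | h⟩ := (center hz).exists_primeCompl_mul_eq_or_mul_eq (K := K) y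
    · exact ⟨n, d, d.2, h⟩
    · change y * (n : K) = (d : integralFunctions F z) at h
      obtain ⟨hd0, hd⟩ := (notMem_center hz).1 d.2
      rw [← h] at hd0 hd
      have hy0 := left_ne_zero_of_mul hd0
      have hn0 := right_ne_zero_of_mul hd0
      rw [p.ord_mul _ _ hy0 hn0] at hd
      have hy' := hy.le_ord hy0
      have hn' := (ordGE_coe hz n).le_ord hn0
      exact ⟨d, n, (notMem_center hz).2 ⟨hn0, by omega⟩, h⟩
  · rintro ⟨s, u, hu, hs⟩
    obtain ⟨hu0, hu⟩ := (notMem_center hz).1 hu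
    by_cases hy0 : y = 0
    · exact Or.inl hy0
    have hs' := (ordGE_coe hz s).le_ord (hs ▸ mul_ne_zero hy0 hu0)
    rw [← hs, p.ord_mul _ _ hy0 hu0] at hs'
    exact .of_le (by omega)

theorem center_injective :
    Function.Injective fun p : {p : FFPlace F K // p.OrdGE z 0} => center p.2 := by
  rintro ⟨p, hp⟩ ⟨q, hq⟩ (hpq : center hp = center hq)
  refine Subtype.ext (ext_of_ordGE_zero fun y => ?_)
  rw [ordGE_zero_iff_exists_notMem_center hp, ordGE_zero_iff_exists_notMem_center hq, hpq]

theorem finite_setOf_zero_of_regular {w : integralFunctions F z} (hw : w ≠ 0) :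
    {p : FFPlace F K | p.OrdGE z 0 ∧ p.OrdGE (w : K) 1}.Finite := by
  have hfin : {v : IsDedekindDomain.HeightOneSpectrum (integralFunctions F z) |
      v.asIdeal ∣ Ideal.span {w}}.Finite := Ideal.finite_factors (by simpa using hw)
  refine ((hfin.preimage center_injective.injOn).image Subtype.val).subset ?_
  rintro p ⟨hp, hpw⟩
  exact ⟨⟨p, hp⟩, Ideal.dvd_span_singleton.2 hpw, rfl⟩

theorem finite_setOf_ord_ne_zero_of_regular (hy : y ≠ 0) :
    {p : FFPlace F K | p.OrdGE z 0 ∧ p.ord y ≠ 0}.Finite := by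
  obtain ⟨s, u, hs0, hu0, hs⟩ := exists_integral_fraction (F := F) (z := z) hy
  refine ((finite_setOf_zero_of_regular hs0).union (finite_setOf_zero_of_regular hu0)).subset ?_
  rintro p ⟨hp, hpy⟩
  by_contra h
  simp only [Set.mem_union, Set.mem_ofPred_eq, hp, true_and, not_or, ← mem_center hp,
    notMem_center hp] at h
  obtain ⟨⟨-, hs1⟩, hu, hu1⟩ := h
  rw [← hs, p.ord_mul _ _ hy hu] at hs1
  omega

end FFPlace

section Divisors

variable {A B : FFPlace F K →₀ ℤ}

theorem divDeg_add (A B : FFPlace F K →₀ ℤ) : divDeg (A + B) = divDeg A + divDeg B :=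
  Finsupp.sum_add_index' (fun _ => by simp) fun _ _ _ => by ring

/-- The degree of divisors as a group homomorphism. -/
noncomputable def divDegHom : (FFPlace F K →₀ ℤ) →+ ℤ := AddMonoidHom.mk' divDeg divDeg_add

theorem divDeg_zero : divDeg (0 : FFPlace F K →₀ ℤ) = 0 :=
  map_zero (divDegHom (F := F) (K := K))

theorem divDeg_neg (A : FFPlace F K →₀ ℤ) : divDeg (-A) = -divDeg A := map_neg divDegHom A

theorem divDeg_sub (A B : FFPlace F K →₀ ℤ) : divDeg (A - B) = divDeg A - divDeg B :=
  map_sub divDegHom A B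

theorem divDeg_nsmul (n : ℕ) (A : FFPlace F K →₀ ℤ) : divDeg (n • A) = n * divDeg A := by
  exact (map_nsmul divDegHom n A).trans (nsmul_eq_mul n (divDeg A))

theorem divDeg_single (p : FFPlace F K) (n : ℤ) :
    divDeg (Finsupp.single p n) = n * p.deg := Finsupp.sum_single_index (by simp)

theorem divDeg_eq_sum (A : FFPlace F K →₀ ℤ) (s : Finset (FFPlace F K))
    (h : ∀ p, A p ≠ 0 → p ∈ s) : divDeg A = ∑ p ∈ s, A p * p.deg :=
  Finsupp.sum_of_support_subset A (fun p hp => h p (Finsupp.mem_support_iff.1 hp)) _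
    fun p _ => by simp

theorem divDeg_nonneg (hA : 0 ≤ A) : 0 ≤ divDeg A :=
  Finset.sum_nonneg fun p _ => mul_nonneg (hA p) (Int.natCast_nonneg _)

theorem divDeg_pos (hff : IsFunctionField F K) (hA : 0 ≤ A) (h0 : A ≠ 0) : 0 < divDeg A := by
  obtain ⟨p, hp⟩ := Finsupp.ne_iff.1 h0
  exact Finset.sum_pos' (fun q _ => mul_nonneg (hA q) (Int.natCast_nonneg _))
    ⟨p, Finsupp.mem_support_iff.2 hp,
      mul_pos (lt_of_le_of_ne (hA p) (Ne.symm hp)) (by exact_mod_cast p.deg_pos hff)⟩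

theorem divisor_le_induction {P : (FFPlace F K →₀ ℤ) → Prop} (base : P A)
    (step : ∀ B p, P B → P (B + Finsupp.single p 1)) (hAB : A ≤ B) : P B := by
  let ψ : (FFPlace F K →₀ ℕ) →+ (FFPlace F K →₀ ℤ) :=
    Finsupp.mapRange.addMonoidHom (Nat.castAddMonoidHom ℤ)
  have add_effective : ∀ D : FFPlace F K →₀ ℕ, ∀ C, P C → P (C + ψ D) := by
    intro D
    induction D using Finsupp.induction_linear with
    | zero => simp
    | add D E hD hE =>
      intro C hC
      rw [map_add, ← add_assoc]
      exact hE _ (hD C hC)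
    | single p n =>
      induction n with
      | zero => simp
      | succ n ih =>
        intro C hC
        have hψ : ψ (Finsupp.single p 1) = Finsupp.single p 1 := by simp [ψ]
        rw [Finsupp.single_add, map_add, ← add_assoc, hψ]
        exact step _ p (ih C hC)
  have hB : B = A + ψ ((B - A).mapRange Int.toNat rfl) := by
    ext p
    have := hAB p
    simp only [ψ, Finsupp.add_apply, Finsupp.mapRange.addMonoidHom_apply,
      Finsupp.mapRange_apply, Finsupp.sub_apply, Nat.coe_castAddMonoidHom]
    omega
  rw [hB]
  exact add_effective _ A base

end Divisors

section RiemannRochSpace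

variable {A B : FFPlace F K →₀ ℤ}

theorem mem_RRspace_iff {f : K} : f ∈ RRspace A ↔ ∀ p : FFPlace F K, p.OrdGE f (-(A p)) :=
  ⟨fun h p => h.imp_right (· p), fun h => or_iff_not_imp_left.2 fun hf p => (h p).le_ord hf⟩

theorem RRspace_mono (h : A ≤ B) : RRspace A ≤ RRspace B := fun _ hf =>
  mem_RRspace_iff.2 fun p => (mem_RRspace_iff.1 hf p).mono (neg_le_neg (h p))

variable {p : FFPlace F K} {z : K}

theorem mul_mem_valRing (hz : p.ord z = A p) (f : RRspace A) : (f : K) * z ∈ p.valRing := by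
  have h := (mem_RRspace_iff.1 f.2 p).mul (.rfl_ord p z)
  rwa [hz, neg_add_cancel] at h

/-- The leading coefficient at `p` of the functions in `L(A)`, in the normalization given by
a function `z` of order `A p` at `p`. -/
def leadingCoeffMap (hz : p.ord z = A p) : RRspace A →ₗ[F] p.valRing ⧸ p.maxIdeal where
  toFun f := Ideal.Quotient.mk p.maxIdeal ⟨f * z, mul_mem_valRing hz f⟩
  map_add' f g := by
    rw [← map_add]
    exact congrArg _ (Subtype.ext (add_mul (f : K) g z))
  map_smul' c f := by
    rw [RingHom.id_apply, Algebra.smul_def]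
    change _ = Ideal.Quotient.mk p.maxIdeal (algebraMap F p.valRing c) * _
    rw [← map_mul]
    exact congrArg _ (Subtype.ext (smul_mul_assoc c (f : K) z |>.trans (Algebra.smul_def _ _)))

theorem mem_ker_leadingCoeffMap (hz0 : z ≠ 0) (hz : p.ord z = A p) {f : RRspace A} :
    f ∈ LinearMap.ker (leadingCoeffMap hz) ↔ (f : K) ∈ RRspace (A - Finsupp.single p 1) := by
  classical
  have hker : f ∈ LinearMap.ker (leadingCoeffMap hz) ↔ p.OrdGE ((f : K) * z) 1 :=
    Ideal.Quotient.eq_zero_iff_mem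
  rw [hker, mem_RRspace_iff]
  by_cases hf0 : (f : K) = 0
  · simp [hf0, FFPlace.OrdGE]
  rw [FFPlace.ordGE_iff (mul_ne_zero hf0 hz0), p.ord_mul _ _ hf0 hz0, hz]
  constructor
  · intro h q
    by_cases hq : q = p
    · subst hq
      exact .of_le (by simp; omega)
    · simpa [Ne.symm hq] using mem_RRspace_iff.1 f.2 q
  · intro h
    have := (h p).le_ord hf0
    simp at this
    omega

theorem RRspace_add_single (hff : IsFunctionField F K) (A : FFPlace F K →₀ ℤ) (p : FFPlace F K)
    [FiniteDimensional F (RRspace A)] :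
    FiniteDimensional F (RRspace (A + Finsupp.single p 1)) ∧
      ellDim (A + Finsupp.single p 1) ≤ ellDim A + p.deg := by
  have := p.finite_residueField hff
  obtain ⟨z, hz0, hz⟩ := p.ord_surj ((A + Finsupp.single p 1 : FFPlace F K →₀ ℤ) p)
  set φ := leadingCoeffMap hz
  have hle : RRspace A ≤ RRspace (A + Finsupp.single p 1) :=
    RRspace_mono (le_add_of_nonneg_right (Finsupp.single_nonneg.2 zero_le_one))
  have hker : LinearMap.ker φ = (RRspace A).submoduleOf (RRspace (A + Finsupp.single p 1)) := by
    ext f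
    rw [mem_ker_leadingCoeffMap hz0 hz, add_sub_cancel_right]
    rfl
  let e : LinearMap.ker φ ≃ₗ[F] RRspace A :=
    (LinearEquiv.ofEq _ _ hker).trans (Submodule.submoduleOfEquivOfLe hle)
  have : Module.Finite F (LinearMap.ker φ) := .equiv e.symm
  have : Module.Finite F (_ ⧸ LinearMap.ker φ) := .equiv φ.quotKerEquivRange.symm
  have hfin := Module.Finite.of_submodule_quotient (LinearMap.ker φ)
  refine ⟨hfin, ?_⟩
  rw [ellDim, ← φ.finrank_range_add_finrank_ker, e.finrank_eq, add_comm]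
  exact Nat.add_le_add_left (Submodule.finrank_le _) _

theorem RRspace_le (hff : IsFunctionField F K) (hAB : A ≤ B)
    [hA : FiniteDimensional F (RRspace A)] :
    FiniteDimensional F (RRspace B) ∧ (ellDim B : ℤ) ≤ ellDim A + divDeg B - divDeg A := by
  refine divisor_le_induction (P := fun B => FiniteDimensional F (RRspace B) ∧
    (ellDim B : ℤ) ≤ ellDim A + divDeg B - divDeg A) ⟨hA, by linarith⟩ ?_ hAB
  rintro B p ⟨_, hB⟩
  obtain ⟨hfin, hle⟩ := RRspace_add_single hff B p
  refine ⟨hfin, ?_⟩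
  rw [divDeg_add, divDeg_single]
  zify at hle
  linarith

end RiemannRochSpace

section PrincipalDivisors

variable [CharZero F] {y : K}

theorem IsFunctionField.exists_pole (hff : IsFunctionField F K) (hy : Transcendental F y) :
    ∃ p : FFPlace F K, p.ord y < 0 := by
  by_contra! h
  have hz : Transcendental F y⁻¹ := fun h => hy (by simpa using h.inv)
  have hy0 : y ≠ 0 := fun h0 => hy (h0 ▸ isAlgebraic_zero)
  have := hff.finiteDimensional_adjoin hz
  have hint : IsIntegral (Algebra.adjoin F {y⁻¹}) y :=
    FFPlace.isIntegral_of_ordGE fun p _ => .of_le (h p)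
  have hmem : y ∈ F⟮y⁻¹⟯ := by
    simpa using inv_mem (IntermediateField.mem_adjoin_simple_self F y⁻¹)
  have hint' : IsIntegral (Algebra.adjoin F {y⁻¹}) (⟨y, hmem⟩ : F⟮y⁻¹⟯) :=
    (isIntegral_algebraMap_iff (B := K) (algebraMap F⟮y⁻¹⟯ K).injective).1 hint
  obtain ⟨⟨u, hu⟩, huy⟩ := IsIntegrallyClosed.isIntegral_iff.1 hint'
  obtain ⟨q, hq⟩ := exists_aeval_eq_of_mem_adjoin hu
  rw [show u = y from congrArg Subtype.val huy] at hq
  refine hz ⟨X * q - 1, fun h0 => ?_, ?_⟩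
  · simpa using congrArg (coeff · 0) h0
  · rw [map_sub, map_mul, aeval_X, hq, map_one, inv_mul_cancel₀ hy0, sub_self]

theorem IsFunctionField.finite_ord_ne_zero (hff : IsFunctionField F K) (hy : y ≠ 0) :
    {p : FFPlace F K | p.ord y ≠ 0}.Finite := by
  obtain ⟨t, ht, _⟩ := id hff
  have ht' : Transcendental F t⁻¹ := fun h => ht (by simpa using h.inv)
  have := hff.finiteDimensional_adjoin ht'
  refine ((FFPlace.finite_setOf_ord_ne_zero_of_regular (z := t) hy).union
    (FFPlace.finite_setOf_ord_ne_zero_of_regular (z := t⁻¹) hy)).subset fun p hp => ?_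
  rcases le_total 0 (p.ord t) with h | h
  · exact Or.inl ⟨.of_le h, hp⟩
  · exact Or.inr ⟨.of_le (by rw [FFPlace.ord_inv]; omega), hp⟩

open Classical in
/-- The divisor of a function. It is set to zero if the support is infinite, which in a function
field happens for no function. -/
noncomputable def principalDiv (y : K) : FFPlace F K →₀ ℤ :=
  if h : {p : FFPlace F K | p.ord y ≠ 0}.Finite then .ofSupportFinite (fun p => p.ord y) h else 0

theorem IsFunctionField.principalDiv_apply (hff : IsFunctionField F K) (hy : y ≠ 0)
    (p : FFPlace F K) : principalDiv y p = p.ord y := by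
  rw [principalDiv, dif_pos (hff.finite_ord_ne_zero hy)]
  rfl

/-- The divisor of zeros of a function. -/
noncomputable def zeroDiv (y : K) : FFPlace F K →₀ ℤ := principalDiv y ⊔ 0

omit [CharZero F] in
theorem zeroDiv_nonneg (y : K) : (0 : FFPlace F K →₀ ℤ) ≤ zeroDiv y := le_sup_right

theorem IsFunctionField.zeroDiv_apply (hff : IsFunctionField F K) (hy : y ≠ 0)
    (p : FFPlace F K) : zeroDiv y p = max (p.ord y) 0 := by
  rw [zeroDiv, Finsupp.sup_apply, hff.principalDiv_apply hy, Finsupp.zero_apply]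

theorem divDeg_zeroDiv_pos (hff : IsFunctionField F K) (hy : Transcendental F y) :
    0 < divDeg (zeroDiv y : FFPlace F K →₀ ℤ) := by
  have hy0 : y ≠ 0 := fun h0 => hy (h0 ▸ isAlgebraic_zero)
  refine divDeg_pos hff (zeroDiv_nonneg y) ?_
  obtain ⟨p, hp⟩ := hff.exists_pole (y := y⁻¹) fun h => hy (by simpa using h.inv)
  rw [FFPlace.ord_inv] at hp
  refine Finsupp.ne_iff.2 ⟨p, ?_⟩
  rw [hff.zeroDiv_apply hy0, Finsupp.zero_apply]
  omega

end PrincipalDivisors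

section FunctionsWithoutPoles

variable [CharZero F] (hff : IsFunctionField F K) (hcf : IsConstantField F K)
  {A B : FFPlace F K →₀ ℤ} {y : K}

include hff hcf

theorem mem_range_of_forall_ordGE_zero (hy : ∀ p : FFPlace F K, p.OrdGE y 0) :
    y ∈ (algebraMap F K).range := by
  by_cases hy0 : y = 0
  · exact hy0 ▸ zero_mem _
  refine hcf y (by_contra fun h => ?_)
  obtain ⟨p, hp⟩ := hff.exists_pole h
  exact hp.not_ge ((hy p).le_ord hy0)

theorem RRspace_zero : RRspace (0 : FFPlace F K →₀ ℤ) = Submodule.span F {(1 : K)} := by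
  ext f
  rw [mem_RRspace_iff, Submodule.mem_span_singleton]
  constructor
  · intro h
    obtain ⟨c, rfl⟩ := mem_range_of_forall_ordGE_zero hff hcf (y := f) (by simpa using h)
    exact ⟨c, by rw [Algebra.smul_def, mul_one]⟩
  · rintro ⟨c, rfl⟩ p
    rw [Algebra.smul_def, mul_one]
    simpa using FFPlace.OrdGE.algebraMap p c

theorem ellDim_zero : ellDim (0 : FFPlace F K →₀ ℤ) = 1 := by
  rw [ellDim, RRspace_zero hff hcf, finrank_span_singleton one_ne_zero]

theorem finiteDimensional_RRspace (A : FFPlace F K →₀ ℤ) :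
    FiniteDimensional F (RRspace A) := by
  have : FiniteDimensional F (RRspace (0 : FFPlace F K →₀ ℤ)) := by
    rw [RRspace_zero hff hcf]; infer_instance
  have := (RRspace_le hff (le_sup_right : (0 : FFPlace F K →₀ ℤ) ≤ A ⊔ 0)).1
  exact Submodule.finiteDimensional_of_le (RRspace_mono (le_sup_left : A ≤ A ⊔ 0))

theorem ellDim_le_of_le (h : A ≤ B) : (ellDim B : ℤ) ≤ ellDim A + divDeg B - divDeg A :=
  have := finiteDimensional_RRspace hff hcf A
  (RRspace_le hff h).2

end FunctionsWithoutPoles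

section DegreeOfPrincipalDivisors

variable [CharZero F] (hff : IsFunctionField F K) (hcf : IsConstantField F K) {g : ℤ}
  (hR : ∀ A : FFPlace F K →₀ ℤ, divDeg A - ellDim A + 1 ≤ g) {y : K}

include hff hcf

theorem ellDim_nsmul_principalDiv_le_one (hy : y ≠ 0) (n : ℕ) :
    ellDim (n • (principalDiv y : FFPlace F K →₀ ℤ)) ≤ 1 := by
  have hle : RRspace (n • (principalDiv y : FFPlace F K →₀ ℤ))
      ≤ Submodule.span F {(y ^ n)⁻¹} := by
    intro f hf
    obtain ⟨c, hc⟩ := mem_range_of_forall_ordGE_zero hff hcf (y := f * y ^ n) fun p => by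
      simpa [hff.principalDiv_apply hy] using
        (mem_RRspace_iff.1 hf p).mul (.of_le (p.ord_pow y n).ge)
    refine Submodule.mem_span_singleton.2 ⟨c, ?_⟩
    rw [Algebra.smul_def, hc, mul_assoc, mul_inv_cancel₀ (pow_ne_zero n hy), mul_one]
  exact (Submodule.finrank_mono hle).trans ((finrank_span_le_card _).trans (by simp))

include hR

-- If `deg (y) > 0` then `deg (n (y)) - ℓ(n (y))` is unbounded.
theorem divDeg_principalDiv_le (hy : y ≠ 0) :
    divDeg (principalDiv y : FFPlace F K →₀ ℤ) ≤ 0 := by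
  by_contra! hpos
  have hgenus := hR ((g.toNat + 1) • (principalDiv y : FFPlace F K →₀ ℤ))
  have hell := ellDim_nsmul_principalDiv_le_one hff hcf hy (g.toNat + 1)
  have := Int.self_le_toNat g
  rw [divDeg_nsmul] at hgenus
  push_cast at hgenus
  nlinarith

theorem divDeg_principalDiv (hy : y ≠ 0) :
    divDeg (principalDiv y : FFPlace F K →₀ ℤ) = 0 := by
  refine le_antisymm (divDeg_principalDiv_le hff hcf hR hy) ?_
  have hinv : (principalDiv y⁻¹ : FFPlace F K →₀ ℤ) = -principalDiv y := by
    ext p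
    rw [Finsupp.neg_apply, hff.principalDiv_apply hy, hff.principalDiv_apply (inv_ne_zero hy),
      FFPlace.ord_inv]
  have hle := divDeg_principalDiv_le hff hcf hR (inv_ne_zero hy)
  rw [hinv, divDeg_neg] at hle
  linarith

theorem sum_ord_mul_deg (hy : y ≠ 0) (s : Finset (FFPlace F K))
    (hs : ∀ p : FFPlace F K, p.ord y ≠ 0 → p ∈ s) : ∑ p ∈ s, p.ord y * p.deg = 0 := by
  simp only [← hff.principalDiv_apply hy] at hs ⊢
  rw [← divDeg_eq_sum _ s hs, divDeg_principalDiv hff hcf hR hy]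

theorem ellDim_eq_zero_of_neg {B : FFPlace F K →₀ ℤ} (hB : divDeg B < 0) : ellDim B = 0 := by
  suffices RRspace B = ⊥ by rw [ellDim, this, finrank_bot]
  refine (Submodule.eq_bot_iff _).2 fun f hf => by_contra fun hf0 => hB.not_ge ?_
  have heff : 0 ≤ principalDiv f + B := fun p => by
    have := (mem_RRspace_iff.1 hf p).le_ord hf0
    rw [Finsupp.add_apply, hff.principalDiv_apply hf0, Finsupp.zero_apply]
    omega
  simpa [divDeg_add, divDeg_principalDiv hff hcf hR hf0] using divDeg_nonneg heff

end DegreeOfPrincipalDivisors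

section SpanOverRationalFunctions

/-- The span of the Riemann–Roch space `L(B)` over the field `F(s)` of rational functions in `s`. -/
noncomputable def RRspan (s : K) (B : FFPlace F K →₀ ℤ) : Submodule F⟮s⟯ K :=
  Submodule.span _ (RRspace B : Set K)

variable [CharZero F] (hff : IsFunctionField F K) {s : K} {A B : FFPlace F K →₀ ℤ}

include hff

theorem sum_coeff_zero_smul_mem_RRspace {ι : Type*} [Fintype ι] (hs0 : s ≠ 0)
    {w : ι → RRspace B} {q : ι → F[X]} (hq : ∑ i, aeval s (q i) * (w i : K) = 0) :
    ∑ i, (q i).coeff 0 • (w i : K) ∈ RRspace (B - zeroDiv s) := by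
  rw [mem_RRspace_iff]
  intro p
  rw [Finsupp.sub_apply, hff.zeroDiv_apply hs0]
  by_cases hp : p.ord s ≤ 0
  · rw [max_eq_right hp, sub_zero]
    exact .sum fun i _ => mem_RRspace_iff.1 ((q i).coeff 0 • w i).2 p
  · push Not at hp
    have hdivX : ∑ i, (q i).coeff 0 • (w i : K)
        = ∑ i, -(s * aeval s (q i).divX) * (w i : K) := by
      rw [← sub_eq_zero, ← Finset.sum_sub_distrib, ← hq]
      refine Finset.sum_congr rfl fun i _ => ?_
      nth_rw 3 [← divX_mul_X_add (q i)]
      rw [map_add, map_mul, aeval_X, aeval_C, Algebra.smul_def]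
      ring
    rw [hdivX]
    refine .sum fun i _ => ?_
    have hmul : p.OrdGE (s * aeval s (q i).divX) (p.ord s + 0) :=
      (FFPlace.OrdGE.rfl_ord p s).mul (.aeval (.of_le hp.le) _)
    refine (hmul.neg.mul (mem_RRspace_iff.1 (w i).2 p)).mono ?_
    rw [max_eq_left hp.le]
    omega

theorem ellDim_le_add_finrank_RRspan (hcf : IsConstantField F K) (hs : Transcendental F s)
    (B : FFPlace F K →₀ ℤ) :
    ellDim B ≤ ellDim (B - zeroDiv s) + Module.finrank F⟮s⟯ (RRspan s B) := by
  have := hff.finiteDimensional_adjoin hs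
  have hs0 : s ≠ 0 := fun h0 => hs (h0 ▸ isAlgebraic_zero)
  have := finiteDimensional_RRspace hff hcf B
  set U : Submodule F (RRspace B) := (RRspace (B - zeroDiv s)).submoduleOf (RRspace B)
  have hU : Module.finrank F U = ellDim (B - zeroDiv s) :=
    (Submodule.submoduleOfEquivOfLe (RRspace_mono (sub_le_self _ (zeroDiv_nonneg s)))).finrank_eq
  let b := Module.finBasis F (RRspace B ⧸ U)
  choose w hw using fun i => Submodule.Quotient.mk_surjective U (b i)
  have hli : LinearIndependent F⟮s⟯ fun i => (w i : K) := by
    refine linearIndependent_adjoin_of_coeff_zero hs0 fun q hq => ?_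
    have hmem : ∑ i, (q i).coeff 0 • w i ∈ U := by
      change ((∑ i, (q i).coeff 0 • w i : RRspace B) : K) ∈ RRspace (B - zeroDiv s)
      simpa using sum_coeff_zero_smul_mem_RRspace hff hs0 hq
    refine Fintype.linearIndependent_iff.1 b.linearIndependent _ ?_
    rw [← (Submodule.Quotient.mk_eq_zero U).2 hmem, ← Submodule.mkQ_apply, map_sum]
    simp only [map_smul, Submodule.mkQ_apply, hw]
  have hcard := (LinearIndependent.of_comp (RRspan s B).subtype
    (v := fun i => ⟨w i, Submodule.subset_span (w i).2⟩) hli).fintype_card_le_finrank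
  rw [Fintype.card_fin] at hcard
  have hquot := Submodule.finrank_quotient_add_finrank U
  change Module.finrank F (RRspace B) ≤ _
  omega

/-- The two spans are orthogonal for the trace form, which is nondegenerate. -/
theorem finrank_RRspan_add_finrank_RRspan_le (hs : Transcendental F s)
    (htr : ∀ f ∈ RRspace (A + B), Algebra.trace F⟮s⟯ K f = 0) :
    Module.finrank F⟮s⟯ (RRspan s A) + Module.finrank F⟮s⟯ (RRspan s B) ≤
      Module.finrank F⟮s⟯ K := by
  have := hff.finiteDimensional_adjoin hs
  let β := Algebra.traceForm F⟮s⟯ K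
  have horth : RRspan s A ≤ β.orthogonal (RRspan s B) := by
    refine Submodule.span_le.2 fun f hf => ?_
    rw [SetLike.mem_coe, LinearMap.BilinForm.mem_orthogonal_iff]
    have hker : RRspan s B ≤ LinearMap.ker (β f) := by
      refine Submodule.span_le.2 fun u hu => htr _ ?_
      rw [SetLike.mem_coe, mem_RRspace_iff] at *
      intro p
      exact ((hf p).mul (hu p)).mono (by rw [Finsupp.add_apply]; omega)
    exact fun u hu => ((Algebra.traceForm_isSymm F⟮s⟯ (S := K)).eq f u).symm.trans (hker hu)
  have hle := Submodule.finrank_mono horth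
  rw [LinearMap.BilinForm.finrank_orthogonal (traceForm_nondegenerate _ K)] at hle
  have := Submodule.finrank_le (RRspan s B)
  omega

end SpanOverRationalFunctions

section DegreeOverRationalFunctions

theorem linearIndependent_pow_of_transcendental {R : Type*} [CommRing R] [Algebra F R] {t : R}
    (ht : Transcendental F t) : LinearIndependent F fun n : ℕ => t ^ n := by
  have h := (basisMonomials F).linearIndependent.map' (aeval t).toLinearMap
    (LinearMap.ker_eq_bot.2 (transcendental_iff_injective.1 ht))
  simpa [Function.comp_def, coe_basisMonomials, aeval_monomial] using h

theorem adjoin_inv_singleton (s : K) : F⟮s⁻¹⟯ = F⟮s⟯ := by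
  apply le_antisymm <;> refine IntermediateField.adjoin_simple_le_iff.2 ?_
  · exact inv_mem (IntermediateField.mem_adjoin_simple_self F s)
  · simpa using inv_mem (IntermediateField.mem_adjoin_simple_self F s⁻¹)

variable [CharZero F] (hff : IsFunctionField F K) (hcf : IsConstantField F K)

include hff

theorem exists_effective_forall_mem_RRspace {n : ℕ} {w : Fin n → K}
    (hw : ∀ i, w i ≠ 0) : ∃ C : FFPlace F K →₀ ℤ, 0 ≤ C ∧ ∀ i, w i ∈ RRspace C := by
  refine ⟨∑ i, (-principalDiv (w i)) ⊔ 0, Finset.sum_nonneg fun i _ => le_sup_right, fun i => ?_⟩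
  have hle : -principalDiv (w i) ≤ ∑ i, (-principalDiv (w i)) ⊔ (0 : FFPlace F K →₀ ℤ) :=
    le_sup_left.trans (Finset.single_le_sum
      (f := fun i => (-principalDiv (w i)) ⊔ (0 : FFPlace F K →₀ ℤ))
      (fun i _ => le_sup_right) (Finset.mem_univ i))
  refine mem_RRspace_iff.2 fun p => .of_le ?_
  have := hle p
  rw [Finsupp.neg_apply, hff.principalDiv_apply (hw i)] at this
  omega

theorem inv_pow_mul_mem_RRspace {s w : K} (hs0 : s ≠ 0) {C : FFPlace F K →₀ ℤ}
    (hw : w ∈ RRspace C) {j N : ℕ} (hj : j ≤ N) : s⁻¹ ^ j * w ∈ RRspace (C + N • zeroDiv s) := by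
  rw [mem_RRspace_iff] at *
  intro p
  refine ((FFPlace.OrdGE.rfl_ord p (s⁻¹ ^ j)).mul (hw p)).mono ?_
  rw [FFPlace.ord_pow, FFPlace.ord_inv, Finsupp.add_apply, Finsupp.smul_apply,
    hff.zeroDiv_apply hs0, nsmul_eq_mul]
  have : (j : ℤ) * p.ord s ≤ N * max (p.ord s) 0 :=
    (mul_le_mul_of_nonneg_left (le_max_left _ 0) j.cast_nonneg).trans
      (mul_le_mul_of_nonneg_right (by exact_mod_cast hj) (le_max_right _ _))
  linarith

include hcf

theorem succ_mul_finrank_adjoin_le {s : K} (hs : Transcendental F s) {ι : Type*} [Fintype ι]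
    {w : ι → K} (hli : LinearIndependent F⟮s⟯ w) {C : FFPlace F K →₀ ℤ} (hw : ∀ i, w i ∈ RRspace C)
    (N : ℕ) : (N + 1) * Fintype.card ι ≤ ellDim (C + N • zeroDiv s) := by
  have hs0 : s ≠ 0 := fun h0 => hs (h0 ▸ isAlgebraic_zero)
  set t : F⟮s⟯ := ⟨s⁻¹, inv_mem (IntermediateField.mem_adjoin_simple_self F s)⟩
  have ht : Transcendental F t := fun h =>
    hs (by simpa [t] using (h.algebraMap (A := K)).inv)
  have hpow : LinearIndependent F fun j : Fin (N + 1) => t ^ (j : ℕ) :=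
    (linearIndependent_pow_of_transcendental ht).comp _ Fin.val_injective
  have hprod : LinearIndependent F fun q : Fin (N + 1) × ι => s⁻¹ ^ (q.1 : ℕ) * w q.2 := by
    convert linearIndependent_smul hpow hli using 2 with q
    rw [Algebra.smul_def, map_pow]
    rfl
  have := finiteDimensional_RRspace hff hcf (C + N • zeroDiv s)
  have hmem (q : Fin (N + 1) × ι) : s⁻¹ ^ (q.1 : ℕ) * w q.2 ∈ RRspace (C + N • zeroDiv s) :=
    inv_pow_mul_mem_RRspace hff hs0 (hw q.2) (Nat.lt_succ_iff.1 q.1.2)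
  have hli' : LinearIndependent F fun q => (⟨_, hmem q⟩ : RRspace (C + N • zeroDiv s)) :=
    .of_comp (RRspace (C + N • zeroDiv s)).subtype hprod
  have hcard := hli'.fintype_card_le_finrank
  rwa [Fintype.card_prod, Fintype.card_fin] at hcard

-- For `w` a basis of `K` over `F(s)`, compare the two sides of
-- `(N + 1) [K : F(s)] ≤ ℓ(C + N A) ≤ 1 + deg C + N deg A`, where `A` is the divisor of zeros of
-- `s`, as `N` grows.
theorem finrank_adjoin_le_divDeg_zeroDiv {s : K} (hs : Transcendental F s) :
    (Module.finrank F⟮s⟯ K : ℤ) ≤ divDeg (zeroDiv s : FFPlace F K →₀ ℤ) := by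
  have := hff.finiteDimensional_adjoin hs
  let w := Module.finBasis F⟮s⟯ K
  obtain ⟨C, hC, hwC⟩ := exists_effective_forall_mem_RRspace hff w.ne_zero
  have hbound (N : ℕ) : (N + 1 : ℤ) * Module.finrank F⟮s⟯ K
      ≤ 1 + divDeg C + N * divDeg (zeroDiv s : FFPlace F K →₀ ℤ) := by
    have hlower := succ_mul_finrank_adjoin_le hff hcf hs w.linearIndependent hwC N
    have hupper := ellDim_le_of_le hff hcf (A := 0) (B := C + N • zeroDiv s)
      (add_nonneg hC (nsmul_nonneg (zeroDiv_nonneg s) N))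
    rw [ellDim_zero hff hcf, divDeg_zero, divDeg_add, divDeg_nsmul] at hupper
    rw [Fintype.card_fin] at hlower
    zify at hlower
    push_cast at hupper
    linarith
  by_contra! hlt
  have hdegC := divDeg_nonneg hC
  have hcontra := hbound (1 + divDeg C).toNat
  rw [Int.toNat_of_nonneg (by omega)] at hcontra
  have := divDeg_zeroDiv_pos hff hs
  nlinarith

end DegreeOverRationalFunctions

section TraceOfIntegralFunctions

theorem intTrace_mem_of_pow_mem_map {R S : Type*} [CommRing R] [CommRing S] [Algebra R S]
    [IsDedekindDomain R] [IsDomain S] [Module.IsTorsionFree R S] [Module.Finite R S]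
    [IsIntegrallyClosed S] {p : Ideal R} [p.IsMaximal] {x : S} {n : ℕ}
    (h : x ^ n ∈ p.map (algebraMap R S)) : Algebra.intTrace R S x ∈ p := by
  have hnil : IsNilpotent (Ideal.Quotient.mk (p.map (algebraMap R S)) x) :=
    ⟨n, by rw [← map_pow]; exact Ideal.Quotient.eq_zero_iff_mem.2 h⟩
  have htr := Algebra.isNilpotent_trace_of_isNilpotent (R := R ⧸ p) hnil
  rw [Algebra.trace_quotient_eq_of_isDedekindDomain] at htr
  exact Ideal.Quotient.eq_zero_iff_mem.1 htr.eq_zero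

theorem coe_trace_mul {L : IntermediateField F K} {l : K} (hl : l ∈ L) (h : K) :
    (Algebra.trace L K (l * h) : K) = l * (Algebra.trace L K h : K) :=
  congrArg Subtype.val ((Algebra.trace L K).map_smul (⟨l, hl⟩ : L) h)

theorem coe_trace_adjoin_inv (s h : K) :
    (Algebra.trace F⟮s⁻¹⟯ K h : K) = (Algebra.trace F⟮s⟯ K h : K) := by
  rw [adjoin_inv_singleton]

variable [CharZero F] {z : K} [FiniteDimensional F⟮z⟯ K]

theorem coe_intTrace (k : integralFunctions F z) :
    (Algebra.intTrace (Algebra.adjoin F {z}) (integralFunctions F z) k : K) =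
      (Algebra.trace F⟮z⟯ K (k : K) : K) :=
  congrArg Subtype.val (Algebra.algebraMap_intTrace (A := Algebra.adjoin F {z})
    (B := integralFunctions F z) (K := F⟮z⟯) (L := K) k)

theorem exists_trace_eq_aeval {k : K} (hk : ∀ p : FFPlace F K, p.OrdGE z 0 → p.OrdGE k 0) :
    ∃ G : F[X], (Algebra.trace F⟮z⟯ K k : K) = aeval z G := by
  obtain ⟨G, hG⟩ := exists_aeval_eq_of_mem_adjoin
    (Algebra.intTrace (Algebra.adjoin F {z}) (integralFunctions F z)
      ⟨k, FFPlace.isIntegral_of_ordGE hk⟩).2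
  exact ⟨G, by rw [hG, coe_intTrace]⟩

theorem exists_isIntegral_pow_mul_inv {k u : K} (hu : ∀ p : FFPlace F K, p.OrdGE z 0 → p.OrdGE u 0)
    (hk : ∀ p : FFPlace F K, p.OrdGE z 0 → p.OrdGE k 0)
    (hku : ∀ p : FFPlace F K, p.OrdGE z 0 → p.OrdGE u 1 → p.OrdGE k 1) :
    ∃ N : ℕ, IsIntegral (Algebra.adjoin F {z}) (k ^ N * u⁻¹) := by
  by_cases hu0 : u = 0
  · exact ⟨0, by simpa [hu0] using isIntegral_zero⟩
  obtain ⟨N, hN⟩ := ((FFPlace.finite_setOf_ord_ne_zero_of_regular (F := F) (z := z) hu0).image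
    fun p => p.ord u).bddAbove
  refine ⟨N.toNat, FFPlace.isIntegral_of_ordGE fun p hp => ?_⟩
  have hinv := FFPlace.OrdGE.rfl_ord p u⁻¹
  rw [FFPlace.ord_inv] at hinv
  by_cases hp0 : p.ord u = 0
  · exact (((hk p hp).pow _).mul hinv).mono (by simp [hp0])
  · have hpos := (hu p hp).le_ord hu0
    have hle : p.ord u ≤ N := hN ⟨p, ⟨hp, hp0⟩, rfl⟩
    refine (((hku p hp (.of_le (by omega))).pow _).mul hinv).mono ?_
    omega

/-- A function that vanishes wherever `P(z)` does has a power divisible by `P(z)`. -/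
theorem dvd_of_trace_eq_aeval (hz : Transcendental F z) {P G : F[X]} (hP : Irreducible P) {k : K}
    (hk : ∀ p : FFPlace F K, p.OrdGE z 0 → p.OrdGE k 0)
    (hkP : ∀ p : FFPlace F K, p.OrdGE z 0 → p.OrdGE (aeval z P) 1 → p.OrdGE k 1)
    (hG : (Algebra.trace F⟮z⟯ K k : K) = aeval z G) : P ∣ G := by
  let e := algEquivOfTranscendental F z hz
  have he (q : F[X]) : (e q : K) = aeval z q :=
    (aeval_algebraMap_apply K (⟨z, Algebra.self_mem_adjoin_singleton F z⟩ :
      Algebra.adjoin F {z}) q).symm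
  have hmax : (Ideal.span {e P}).IsMaximal :=
    PrincipalIdealRing.isMaximal_of_irreducible ((MulEquiv.irreducible_iff e).2 hP)
  have hP0 : aeval z P ≠ 0 := fun h => hP.ne_zero (transcendental_iff.1 hz P h)
  obtain ⟨N, hN⟩ := exists_isIntegral_pow_mul_inv (fun p hp => .aeval hp P) hk hkP
  let kint : integralFunctions F z := ⟨k, FFPlace.isIntegral_of_ordGE hk⟩
  have hpow : kint ^ N ∈ (Ideal.span {e P}).map
      (algebraMap (Algebra.adjoin F {z}) (integralFunctions F z)) := by
    rw [Ideal.map_span, Set.image_singleton, Ideal.mem_span_singleton]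
    refine ⟨⟨_, hN⟩, Subtype.ext ?_⟩
    change k ^ N = (e P : K) * (k ^ N * (aeval z P)⁻¹)
    rw [he]
    field_simp
  have htr : Algebra.intTrace (Algebra.adjoin F {z}) (integralFunctions F z) kint = e G :=
    Subtype.ext (by rw [coe_intTrace, he, hG])
  have hdvd := intTrace_mem_of_pow_mem_map hpow
  rwa [htr, Ideal.mem_span_singleton, map_dvd_iff] at hdvd

theorem prod_dvd_of_trace_eq_aeval (hz : Transcendental F z) {S : Finset F[X]} {G : F[X]}
    (hS : ∀ Q ∈ S, Q.Monic ∧ Irreducible Q) {k : K}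
    (hk : ∀ p : FFPlace F K, p.OrdGE z 0 → p.OrdGE k 0)
    (hkS : ∀ p : FFPlace F K, p.OrdGE z 0 → ∀ Q ∈ S, p.OrdGE (aeval z Q) 1 → p.OrdGE k 1)
    (hG : (Algebra.trace F⟮z⟯ K k : K) = aeval z G) : ∏ Q ∈ S, Q ∣ G := by
  refine Finset.prod_dvd_of_coprime (fun Q hQ Q' hQ' hne => ?_) fun Q hQ =>
    dvd_of_trace_eq_aeval hz (hS Q hQ).2 hk (fun p hp => hkS p hp Q hQ) hG
  refine (hS Q hQ).2.coprime_iff_not_dvd.2 fun hdvd => hne ?_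
  exact eq_of_monic_of_associated (hS Q hQ).1 (hS Q' hQ').1
    ((hS Q hQ).2.associated_of_dvd (hS Q' hQ').2 hdvd)

end TraceOfIntegralFunctions

section Hurwitz

/-- `E p + 1` is at most the ramification index of `p` over `F(t)`, which is the order of `1 / t` if
`p` is a pole of `t`, and otherwise the order of `P(t)` for the monic irreducible polynomial `P`
such that `P(t)` vanishes at `p`. -/
structure IsRamificationBound (t : K) (E : FFPlace F K → ℤ) : Prop where
  finite : ∀ p : FFPlace F K, p.OrdGE t 0 →
    ∃ P : F[X], P.Monic ∧ Irreducible P ∧ p.OrdGE (aeval t P) (E p + 1)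
  infinite : ∀ p : FFPlace F K, p.ord t < 0 → E p + 1 ≤ -p.ord t

namespace IsRamificationBound

variable {t h : K} {E : FFPlace F K →₀ ℤ}

/-- Multiplying by `R(t)`, for `R` the product of the polynomials of the ramified places, cancels
the finite poles of a function whose poles are bounded by the ramification. -/
theorem exists_multiplier (hE : IsRamificationBound t E)
    (hh : ∀ p : FFPlace F K, p.OrdGE t 0 → p.OrdGE h (-E p)) :
    ∃ S : Finset F[X], (∀ Q ∈ S, Q.Monic ∧ Irreducible Q) ∧ ∀ p : FFPlace F K, p.OrdGE t 0 →
      p.OrdGE (aeval t (∏ Q ∈ S, Q) * h) 0 ∧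
      ∀ Q ∈ S, p.OrdGE (aeval t Q) 1 → p.OrdGE (aeval t (∏ Q ∈ S, Q) * h) 1 := by
  classical
  choose! P hP using hE.finite
  let S := (E.support.filter fun p => p.OrdGE t 0).image P
  have hmul {p : FFPlace F K} {Q : F[X]} {i : ℤ} (hp : p.OrdGE t 0) (hQ : Q ∈ S)
      (hi : p.OrdGE (aeval t Q) i) : p.OrdGE (aeval t (∏ Q ∈ S, Q)) i := by
    obtain ⟨R, hR⟩ : Q ∣ ∏ Q ∈ S, Q := Finset.dvd_prod_of_mem _ hQ
    rw [hR, map_mul]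
    exact (hi.mul (.aeval hp R)).mono (add_zero i).ge
  refine ⟨S, fun Q hQ => ?_, fun p hp => ?_⟩
  · obtain ⟨p, hp, rfl⟩ := Finset.mem_image.1 hQ
    have := hP p (Finset.mem_filter.1 hp).2
    exact ⟨this.1, this.2.1⟩
  · by_cases hpE : p ∈ E.support
    · have hone : p.OrdGE (aeval t (∏ Q ∈ S, Q) * h) 1 :=
        ((hmul hp (Finset.mem_image_of_mem P (Finset.mem_filter.2 ⟨hpE, hp⟩))
          (hP p hp).2.2).mul (hh p hp)).mono (by omega)
      exact ⟨hone.mono zero_le_one, fun _ _ _ => hone⟩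
    · have hh0 := hh p hp
      rw [Finsupp.notMem_support_iff.1 hpE, neg_zero] at hh0
      exact ⟨(FFPlace.OrdGE.aeval hp _).mul hh0, fun Q hQ hQ1 => (hmul hp hQ hQ1).mul hh0⟩

variable [CharZero F]

theorem exists_trace_eq_aeval (hE : IsRamificationBound t E) (ht : Transcendental F t)
    [FiniteDimensional F⟮t⟯ K] (hh : ∀ p : FFPlace F K, p.OrdGE t 0 → p.OrdGE h (-E p)) :
    ∃ R G : F[X], R ≠ 0 ∧ (∀ p : FFPlace F K, p.OrdGE t 0 → p.OrdGE (aeval t R * h) 0) ∧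
      (Algebra.trace F⟮t⟯ K h : K) = aeval t G := by
  obtain ⟨S, hS, hreg⟩ := hE.exists_multiplier hh
  have hR : ∏ Q ∈ S, Q ≠ 0 := Finset.prod_ne_zero_iff.2 fun Q hQ => (hS Q hQ).2.ne_zero
  obtain ⟨G₀, hG₀⟩ := _root_.exists_trace_eq_aeval fun p hp => (hreg p hp).1
  obtain ⟨G, rfl⟩ := prod_dvd_of_trace_eq_aeval ht hS (fun p hp => (hreg p hp).1)
    (fun p hp => (hreg p hp).2) hG₀
  refine ⟨∏ Q ∈ S, Q, G, hR, fun p hp => (hreg p hp).1, ?_⟩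
  have hmem : aeval t (∏ Q ∈ S, Q) ∈ F⟮t⟯ :=
    IntermediateField.algebra_adjoin_le_adjoin _ _ (aeval_mem_adjoin_singleton F t)
  rw [coe_trace_mul hmem, map_mul] at hG₀
  exact mul_left_cancel₀ (fun h0 => hR (transcendental_iff.1 ht _ h0)) hG₀

end IsRamificationBound

section TraceVanishing

theorem ord_inv_pow_natDegree_mul_aeval {t : K} {p : FFPlace F K} (hp : p.ord t < 0) {R : F[X]}
    (hR : R ≠ 0) : p.ord (t⁻¹ ^ R.natDegree * aeval t R) = 0 := by
  have ht0 : t ≠ 0 := p.ne_zero_of_ord_ne_zero hp.ne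
  obtain ⟨hR0, hord⟩ := FFPlace.ord_aeval_of_neg hp hR
  rw [p.ord_mul _ _ (pow_ne_zero _ (inv_ne_zero ht0)) hR0, hord, FFPlace.ord_pow, FFPlace.ord_inv]
  ring

theorem eq_zero_of_ordGE_inv_pow_natDegree_mul {t : K} {p : FFPlace F K} (hp : p.ord t < 0)
    {R G : F[X]} (hR : R ≠ 0)
    (h : p.OrdGE (t⁻¹ ^ R.natDegree * aeval t R * aeval t G) 1) : G = 0 := by
  by_contra hG
  have ht0 : t ≠ 0 := p.ne_zero_of_ord_ne_zero hp.ne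
  obtain ⟨hR0, -⟩ := FFPlace.ord_aeval_of_neg hp hR
  obtain ⟨hG0, hord⟩ := FFPlace.ord_aeval_of_neg hp hG
  have hv0 := mul_ne_zero (pow_ne_zero R.natDegree (inv_ne_zero ht0)) hR0
  have hle := h.le_ord (mul_ne_zero hv0 hG0)
  rw [p.ord_mul _ _ hv0 hG0, ord_inv_pow_natDegree_mul_aeval hp hR, hord] at hle
  nlinarith

variable [CharZero F] (hff : IsFunctionField F K) {t h : K} (ht : Transcendental F t)

include hff ht

/-- The product of `h` with `t⁻ⁿ R(t)`, `n = deg R`, has no poles where `t⁻¹` is regular and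
vanishes at the zeros of `t⁻¹`; hence so does its trace `t⁻ⁿ R(t) G(t)`, which forces `G = 0`. -/
theorem eq_zero_of_trace_eq_aeval {R G : F[X]} (hR : R ≠ 0)
    (hreg : ∀ p : FFPlace F K, p.OrdGE t 0 → p.OrdGE (aeval t R * h) 0)
    (hpole : ∀ p : FFPlace F K, p.ord t < 0 → p.OrdGE h 1)
    (hG : (Algebra.trace F⟮t⟯ K h : K) = aeval t G) : G = 0 := by
  have ht' : Transcendental F t⁻¹ := fun h => ht (by simpa using h.inv)
  have := hff.finiteDimensional_adjoin ht'
  have ht0 : t ≠ 0 := fun h0 => ht (h0 ▸ isAlgebraic_zero)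
  set v : K := t⁻¹ ^ R.natDegree * aeval t R with hv
  have hvh (p : FFPlace F K) (hp : p.ord t < 0) : p.OrdGE (v * h) 1 := by
    refine ((FFPlace.OrdGE.rfl_ord p v).mul (hpole p hp)).mono ?_
    rw [hv, ord_inv_pow_natDegree_mul_aeval hp hR, zero_add]
  have hvh0 (p : FFPlace F K) (hp : p.OrdGE t⁻¹ 0) : p.OrdGE (v * h) 0 := by
    rcases lt_or_ge (p.ord t) 0 with hneg | hnonneg
    · exact (hvh p hneg).mono zero_le_one
    · rw [hv, mul_assoc]
      exact ((hp.pow _).mul (hreg p (.of_le hnonneg))).mono (by simp)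
  have htr : (Algebra.trace F⟮t⁻¹⟯ K (v * h) : K) = v * aeval t G := by
    have hmem : v ∈ F⟮t⟯ := mul_mem
      (pow_mem (inv_mem (IntermediateField.mem_adjoin_simple_self F t)) _)
      (IntermediateField.algebra_adjoin_le_adjoin _ _ (aeval_mem_adjoin_singleton F t))
    rw [coe_trace_adjoin_inv, coe_trace_mul hmem, hG]
  obtain ⟨G', hG'⟩ := exists_trace_eq_aeval hvh0
  have hneg (p : FFPlace F K) (hp : p.OrdGE (aeval t⁻¹ (X : F[X])) 1) : p.ord t < 0 := by
    rw [aeval_X] at hp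
    have := hp.le_ord (inv_ne_zero ht0)
    rw [FFPlace.ord_inv] at this
    omega
  obtain ⟨H, rfl⟩ : X ∣ G' :=
    dvd_of_trace_eq_aeval ht' irreducible_X hvh0 (fun p _ hp => hvh p (hneg p hp)) hG'
  obtain ⟨p, hp⟩ := hff.exists_pole ht
  have htinv : p.OrdGE t⁻¹ 1 := .of_le (by rw [FFPlace.ord_inv]; omega)
  refine eq_zero_of_ordGE_inv_pow_natDegree_mul hp hR ?_
  rw [← hv, ← htr, hG', map_mul, aeval_X]
  exact (htinv.mul (.aeval (htinv.mono zero_le_one) H)).mono (by omega)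

theorem IsRamificationBound.trace_eq_zero {E : FFPlace F K →₀ ℤ} (hE : IsRamificationBound t E)
    (hh : h ∈ RRspace (E - zeroDiv t⁻¹)) : Algebra.trace F⟮t⟯ K h = 0 := by
  have := hff.finiteDimensional_adjoin ht
  have ht0 : t ≠ 0 := fun h0 => ht (h0 ▸ isAlgebraic_zero)
  simp only [mem_RRspace_iff, Finsupp.sub_apply, hff.zeroDiv_apply (inv_ne_zero ht0),
    FFPlace.ord_inv] at hh
  obtain ⟨R, G, hR, hreg, hG⟩ := hE.exists_trace_eq_aeval ht fun p hp => (hh p).mono (by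
    have := hp.le_ord ht0
    omega)
  have hG0 : G = 0 := eq_zero_of_trace_eq_aeval hff ht hR hreg (fun p hp => (hh p).mono (by
    have := hE.infinite p hp
    omega)) hG
  rw [hG0, map_zero] at hG
  exact Subtype.ext hG

end TraceVanishing

section HurwitzBound

variable [CharZero F] (hff : IsFunctionField F K) (hcf : IsConstantField F K) {t : K}
  (ht : Transcendental F t) {E : FFPlace F K →₀ ℤ} (hE : IsRamificationBound t E)

include hff hcf ht hE

/-- By orthogonality under the trace form, the `F(t)`-spans of `L(E - A - N A)` and `L(N A)` have
dimensions adding up to at most `[K : F(t)]`; sum over the steps from `N` to `N + 1`. -/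
theorem ellDim_add_ellDim_le (N : ℕ) :
    ellDim (E - zeroDiv t⁻¹) + ellDim (N • zeroDiv t⁻¹ - zeroDiv t⁻¹ : FFPlace F K →₀ ℤ) ≤
      ellDim (E - zeroDiv t⁻¹ - N • zeroDiv t⁻¹) +
        ellDim (-zeroDiv t⁻¹ : FFPlace F K →₀ ℤ) + N * Module.finrank F⟮t⟯ K := by
  set A : FFPlace F K →₀ ℤ := zeroDiv t⁻¹ with hA
  have ht' : Transcendental F t⁻¹ := fun h => ht (by simpa using h.inv)
  induction N with
  | zero => simp
  | succ N ih =>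
    have hleft := ellDim_le_add_finrank_RRspan hff hcf ht' (E - A - N • A)
    have hright := ellDim_le_add_finrank_RRspan hff hcf ht' (N • A)
    have horth := finrank_RRspan_add_finrank_RRspan_le hff ht' (A := E - A - N • A) (B := N • A)
      fun f hf => Subtype.ext (by
        rw [coe_trace_adjoin_inv, hE.trace_eq_zero hff ht (by simpa using hf)]
        rfl)
    rw [← hA] at hleft hright
    rw [show E - A - (N + 1) • A = E - A - N • A - A by rw [add_smul, one_smul]; abel,
      show (N + 1) • A - A = N • A by rw [add_smul, one_smul]; abel, add_mul, one_mul]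
    have hdeg : Module.finrank F⟮t⁻¹⟯ K = Module.finrank F⟮t⟯ K := by rw [adjoin_inv_singleton]
    omega

theorem IsRamificationBound.divDeg_le {g : ℤ}
    (hR : ∀ A : FFPlace F K →₀ ℤ, divDeg A - ellDim A + 1 ≤ g) :
    divDeg E ≤ 2 * divDeg (zeroDiv t⁻¹ : FFPlace F K →₀ ℤ) + 2 * g - 2 := by
  have ht' : Transcendental F t⁻¹ := fun h => ht (by simpa using h.inv)
  have hdeg : (Module.finrank F⟮t⟯ K : ℤ) ≤ divDeg (zeroDiv t⁻¹ : FFPlace F K →₀ ℤ) := by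
    rw [← adjoin_inv_singleton]
    exact finrank_adjoin_le_divDeg_zeroDiv hff hcf ht'
  have hpos := divDeg_zeroDiv_pos hff ht'
  have hsum := ellDim_add_ellDim_le hff hcf ht hE
  set A : FFPlace F K →₀ ℤ := zeroDiv t⁻¹
  obtain ⟨N, hN⟩ : ∃ N : ℕ, divDeg E < N :=
    ⟨(divDeg E + 1).toNat, by have := Int.self_le_toNat (divDeg E + 1); omega⟩
  have hneg : ellDim (-A) = 0 := ellDim_eq_zero_of_neg hff hcf hR (by rw [divDeg_neg]; omega)
  have hlarge : ellDim (E - A - N • A) = 0 := by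
    refine ellDim_eq_zero_of_neg hff hcf hR ?_
    rw [divDeg_sub, divDeg_sub, divDeg_nsmul]
    nlinarith
  have hN := hsum N
  rw [hneg, hlarge] at hN
  have hgenus₁ := hR (N • A - A)
  have hgenus₂ := hR (E - A)
  rw [divDeg_sub, divDeg_nsmul] at hgenus₁
  rw [divDeg_sub] at hgenus₂
  have hle : (N : ℤ) * Module.finrank F⟮t⟯ K ≤ N * divDeg A :=
    mul_le_mul_of_nonneg_left hdeg (by positivity)
  zify at hN
  linarith

end HurwitzBound

end Hurwitz

section Derivations

open scoped TensorProduct in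
theorem exists_derivation_extension {R A B M : Type*} [CommRing R] [CommRing A] [CommRing B]
    [Algebra R A] [Algebra A B] [Algebra R B] [IsScalarTower R A B] [Algebra.FormallyEtale A B]
    [AddCommGroup M] [Module R M] [Module A M] [Module B M] [IsScalarTower R A M]
    [IsScalarTower A B M] [IsScalarTower R B M] (d : Derivation R A M) :
    ∃ D : Derivation R B M, ∀ a, D (algebraMap A B a) = d a := by
  let φ : B ⊗[A] Ω[A⁄R] →ₗ[B] M := LinearMap.liftBaseChange B d.liftKaehlerDifferential
  let e := KaehlerDifferential.tensorKaehlerEquivOfFormallyEtale R A B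
  refine ⟨(φ ∘ₗ e.symm.toLinearMap).compDer (KaehlerDifferential.D R B), fun a => ?_⟩
  have he := KaehlerDifferential.tensorKaehlerEquivOfFormallyEtale_symm_D_algebraMap R A B a
  change φ (e.symm (KaehlerDifferential.D R B (algebraMap A B a))) = d a
  rw [he, LinearMap.liftBaseChange_tmul, Derivation.liftKaehlerDifferential_comp_D, one_smul]

theorem exists_derivation_adjoin {z : K} (hz : Transcendental F z) :
    ∃ d : Derivation F (Algebra.adjoin F {z}) K,
      d ⟨z, Algebra.self_mem_adjoin_singleton F z⟩ = 1 := by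
  let e := algEquivOfTranscendental F z hz
  have he (u : Algebra.adjoin F {z}) : aeval z (e.symm u) = (u : K) := by
    obtain ⟨q, rfl⟩ := e.surjective u
    rw [e.symm_apply_apply]
    simp [e]
  refine ⟨.mk' ((aeval z).toLinearMap ∘ₗ derivative ∘ₗ e.symm.toLinearMap) fun u v => ?_, ?_⟩
  · change aeval z (derivative (e.symm (u * v))) =
      (u : K) * aeval z (derivative (e.symm v)) + (v : K) * aeval z (derivative (e.symm u))
    rw [map_mul, derivative_mul, map_add, map_mul, map_mul, he, he]
    ring
  · simp [e]

variable [CharZero F]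

theorem formallyEtale_adjoin_singleton (z : K) [FiniteDimensional F⟮z⟯ K] :
    Algebra.FormallyEtale (Algebra.adjoin F {z}) K := by
  have : Algebra.FormallyEtale (Algebra.adjoin F {z}) F⟮z⟯ :=
    .of_isLocalization (nonZeroDivisors (Algebra.adjoin F {z}))
  have : Algebra.FormallyEtale F⟮z⟯ K := .of_isSeparable _ _
  exact .comp _ F⟮z⟯ _

theorem exists_derivation_apply_eq_one {z : K} (hz : Transcendental F z)
    [FiniteDimensional F⟮z⟯ K] : ∃ D : Derivation F K K, D z = 1 := by
  have := formallyEtale_adjoin_singleton (F := F) z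
  obtain ⟨d, hd⟩ := exists_derivation_adjoin hz
  obtain ⟨D, hD⟩ := exists_derivation_extension (B := K) d
  exact ⟨D, (hD ⟨z, _⟩).trans hd⟩

theorem derivation_eq_zero_of_apply_eq_zero {y : K} [FiniteDimensional F⟮y⟯ K]
    {D : Derivation F K K} (hy : D y = 0) : D = 0 := by
  have hadjoin (a : Algebra.adjoin F {y}) : D (a : K) = 0 := by
    obtain ⟨q, hq⟩ := exists_aeval_eq_of_mem_adjoin a.2
    rw [← hq, D.map_aeval, hy, smul_zero]
  let D' : Derivation (Algebra.adjoin F {y}) K K :=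
    .mk' { D.toLinearMap with
      map_smul' := fun a x => by
        change D ((a : K) * x) = (a : K) * D x
        rw [D.leibniz, hadjoin, smul_zero, add_zero, smul_eq_mul] } D.leibniz
  have := formallyEtale_adjoin_singleton (F := F) y
  ext x
  have hlift := D'.liftKaehlerDifferential_comp_D x
  rw [Subsingleton.elim (KaehlerDifferential.D (Algebra.adjoin F {y}) K x) 0, map_zero] at hlift
  exact hlift.symm

theorem mem_range_of_derivation_eq_zero (hff : IsFunctionField F K) (hcf : IsConstantField F K)
    {D : Derivation F K K} (hD : D ≠ 0) {y : K} (hy : D y = 0) : y ∈ (algebraMap F K).range := by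
  by_contra h
  have := hff.finiteDimensional_adjoin (z := y) fun halg => h (hcf y halg)
  exact hD (derivation_eq_zero_of_apply_eq_zero hy)

end Derivations

namespace FFPlace

/-- A derivation `D` sends functions regular at `p` to functions with a pole of order at most `n`.
If `D` is dual to a differential `ω`, the least such `n` is the order of `ω` at `p`. -/
def DerivationBound (p : FFPlace F K) (D : Derivation F K K) (n : ℤ) : Prop :=
  ∀ y, p.OrdGE y 0 → p.OrdGE (D y) (-n)

variable {p : FFPlace F K} {D : Derivation F K K} {x y z : K} {n i : ℤ}

theorem DerivationBound.ordGE (h : p.DerivationBound D n) (hy : p.OrdGE y i) :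
    p.OrdGE (D y) (i - 1 - n) := by
  obtain ⟨ϖ, hϖ0, hϖ⟩ := p.ord_surj 1
  have hϖi (k : ℤ) : p.OrdGE (ϖ ^ k) k := .of_le (by rw [ord_zpow, hϖ, mul_one])
  have hunit : p.OrdGE (y * ϖ ^ (-i)) 0 := (hy.mul (hϖi (-i))).mono (by omega)
  have hDϖ : p.OrdGE (D (ϖ ^ i)) (i - 1 - n) := by
    rw [D.leibniz_zpow, zsmul_eq_mul, ← map_intCast (algebraMap F K), smul_eq_mul]
    exact ((OrdGE.algebraMap p _).mul ((hϖi (i - 1)).mul (h ϖ (.of_le (by omega))))).mono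
      (by omega)
  have hsplit : y = ϖ ^ i * (y * ϖ ^ (-i)) := by
    rw [zpow_neg, mul_left_comm, mul_inv_cancel₀ (zpow_ne_zero i hϖ0), mul_one]
  rw [hsplit, D.leibniz, smul_eq_mul, smul_eq_mul]
  exact (((hϖi i).mul (h _ hunit)).mono (by omega)).add ((hunit.mul hDϖ).mono (by omega))

theorem exists_forall_ordGE (p : FFPlace F K) {ι : Type*} [Finite ι] (f : ι → K) :
    ∃ m, ∀ i, p.OrdGE (f i) m := by
  obtain ⟨m, hm⟩ := Finite.exists_ge fun i => p.ord (f i)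
  exact ⟨m, fun i => .of_le (hm i)⟩

theorem maxIdeal_isPrime (p : FFPlace F K) : p.maxIdeal.IsPrime := by
  refine ⟨fun h => p.not_ordGE_one_one ?_, fun {a b} hab => ?_⟩
  · exact mem_maxIdeal.1 (h ▸ Submodule.mem_top : (1 : p.valRing) ∈ p.maxIdeal)
  · exact ordGE_one_or_of_mul (x := (a : K)) (y := b) hab

theorem exists_irreducible_aeval_ordGE_one (hff : IsFunctionField F K) (p : FFPlace F K)
    (hz : p.OrdGE z 0) : ∃ P : F[X], P.Monic ∧ Irreducible P ∧ p.OrdGE (aeval z P) 1 := by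
  have := p.maxIdeal_isPrime
  have := finite_residueField hff p
  let ζ : p.valRing := ⟨z, hz⟩
  let ρ := Ideal.Quotient.mkₐ F p.maxIdeal
  have hint : IsIntegral F (ρ ζ) := Algebra.IsIntegral.isIntegral _
  refine ⟨minpoly F (ρ ζ), minpoly.monic hint, minpoly.irreducible hint, ?_⟩
  have hmem : aeval ζ (minpoly F (ρ ζ)) ∈ p.maxIdeal := by
    rw [← Ideal.Quotient.eq_zero_iff_mem, ← Ideal.Quotient.mkₐ_eq_mk F, ← aeval_algHom_apply]
    exact minpoly.aeval F (ρ ζ)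
  have hcoe (q : F[X]) : ((aeval ζ q : p.valRing) : K) = aeval z q :=
    (aeval_algHom_apply ({ p.valRing.subtype with commutes' := fun _ => rfl } :
      p.valRing →ₐ[F] K) ζ q).symm
  rwa [mem_maxIdeal, hcoe] at hmem

variable [CharZero F]

theorem exists_forall_ordGE_derivation_integral [FiniteDimensional F⟮z⟯ K] (hz : p.OrdGE z 0)
    (D : Derivation F K K) : ∃ m, ∀ u : integralFunctions F z, p.OrdGE (D (u : K)) m := by
  obtain ⟨k, w, hw⟩ := Module.Finite.exists_fin (R := Algebra.adjoin F {z})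
    (M := integralFunctions F z)
  obtain ⟨m, hm⟩ := exists_forall_ordGE p fun o : Option (Fin k) =>
    o.elim (D z) fun i => D (w i : K)
  refine ⟨m, fun u => ?_⟩
  have hu : u ∈ Submodule.span (Algebra.adjoin F {z}) (Set.range w) := hw ▸ Submodule.mem_top
  induction hu using Submodule.span_induction with
  | mem u hu =>
    obtain ⟨i, rfl⟩ := hu
    exact hm (some i)
  | zero => simpa using OrdGE.zero p m
  | add u v _ _ hu hv => simpa using hu.add hv
  | smul a u _ hu =>
    obtain ⟨q, hq⟩ := exists_aeval_eq_of_mem_adjoin a.2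
    have hDa : p.OrdGE (D (a : K)) m := by
      rw [← hq, D.map_aeval, smul_eq_mul]
      exact ((OrdGE.aeval hz _).mul (hm none)).mono (zero_add m).ge
    change p.OrdGE (D ((a : K) * u)) m
    rw [D.leibniz, smul_eq_mul, smul_eq_mul]
    exact (((OrdGE.of_mem_adjoin hz a.2).mul hu).mono (zero_add m).ge).add
      (((ordGE_coe hz u).mul hDa).mono (zero_add m).ge)

theorem exists_derivationBound (hff : IsFunctionField F K) (p : FFPlace F K)
    (D : Derivation F K K) : ∃ n, p.DerivationBound D n := by
  obtain ⟨z, -, hz1⟩ := p.ord_surj 1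
  have hz : p.OrdGE z 0 := .of_le (by omega)
  have := hff.finiteDimensional_adjoin (transcendental_of_ord_ne_zero (p := p) (x := z) (by omega))
  obtain ⟨m, hm⟩ := exists_forall_ordGE_derivation_integral hz D
  refine ⟨-m, fun y hy => ?_⟩
  obtain ⟨s, u, hu, hyu⟩ := (ordGE_zero_iff_exists_notMem_center hz).1 hy
  obtain ⟨hu0, hou⟩ := (notMem_center hz).1 hu
  have hDy : D y = (u : K)⁻¹ * (D s - y * D u) := by
    rw [← hyu, D.leibniz, smul_eq_mul, smul_eq_mul]
    field_simp
    ring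
  have huinv : p.OrdGE (u : K)⁻¹ 0 := .of_le (by rw [ord_inv, hou, neg_zero])
  rw [hDy]
  exact (huinv.mul ((hm s).sub ((hy.mul (hm u)).mono (by omega)))).mono (by omega)

theorem ord_aeval_derivative {P : F[X]} (hP : Irreducible P) (hx : p.OrdGE x 0)
    (h : p.OrdGE (aeval x P) 1) :
    aeval x (derivative P) ≠ 0 ∧ p.ord (aeval x (derivative P)) = 0 := by
  have hnot : ¬ p.OrdGE (aeval x (derivative P)) 1 := by
    intro hder
    obtain ⟨a, b, hab⟩ := hP.separable
    refine p.not_ordGE_one_one ?_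
    rw [← map_one (aeval (R := F) x), ← hab, map_add, map_mul, map_mul]
    exact (((OrdGE.aeval hx a).mul h).mono (by omega)).add
      (((OrdGE.aeval hx b).mul hder).mono (by omega))
  obtain ⟨h0, hlt⟩ := not_ordGE_iff.1 hnot
  have hle := (OrdGE.aeval hx (derivative P)).le_ord h0
  exact ⟨h0, by omega⟩

theorem DerivationBound.derivation_uniformizer (h : p.DerivationBound D n) (hn : 0 ≤ n) {q ϖ : K}
    (hϖ : p.ord ϖ = 1) (hq : p.ord q ≠ 0) (hDq : p.OrdGE (D q) (p.ord q)) :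
    p.OrdGE (D ϖ) (1 - n) := by
  have hϖ0 : ϖ ≠ 0 := ne_zero_of_ord_ne_zero (p := p) (by omega)
  have hq0 : q ≠ 0 := ne_zero_of_ord_ne_zero hq
  set e := p.ord q
  set u := q * ϖ ^ (-e) with hu
  have hou : p.ord u = 0 := by
    rw [hu, p.ord_mul _ _ hq0 (zpow_ne_zero _ hϖ0), ord_zpow, hϖ]
    omega
  have heK : algebraMap F K e ≠ 0 := by
    rw [_root_.map_ne_zero]
    exact_mod_cast hq
  have hDu : D u * u⁻¹ = D q * q⁻¹ - algebraMap F K e * (D ϖ * ϖ⁻¹) := by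
    rw [hu, D.leibniz, D.leibniz_zpow, zpow_sub_one₀ hϖ0]
    simp only [smul_eq_mul, zsmul_eq_mul, Int.cast_neg, map_intCast]
    field_simp
    ring
  have hDϖ : D ϖ = (algebraMap F K e)⁻¹ * (ϖ * (D q * q⁻¹ - D u * u⁻¹)) := by
    rw [hDu]
    field_simp
    ring
  have heinv : p.OrdGE (algebraMap F K e)⁻¹ 0 := by
    rw [← map_inv₀]
    exact .algebraMap p _
  have hlogq : p.OrdGE (D q * q⁻¹) 0 := (hDq.mul (.rfl_ord p q⁻¹)).mono (by rw [ord_inv]; omega)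
  have hlogu : p.OrdGE (D u * u⁻¹) (-n) :=
    ((h u (.of_le hou.ge)).mul (.rfl_ord p u⁻¹)).mono (by rw [ord_inv]; omega)
  rw [hDϖ]
  exact (heinv.mul ((OrdGE.of_le hϖ.ge).mul ((hlogq.mono (by omega)).sub hlogu))).mono (by omega)

/-- Applied to `f(y)` for `f` the minimal polynomial of the residue of `y`, the improved bound on
the maximal ideal gives one on the valuation ring. -/
theorem DerivationBound.pred (hff : IsFunctionField F K) (h : p.DerivationBound D n) (hn : 0 ≤ n)
    {q : K} (hq : p.ord q ≠ 0) (hDq : p.OrdGE (D q) (p.ord q)) :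
    p.DerivationBound D (n - 1) := by
  obtain ⟨ϖ, hϖ0, hϖ⟩ := p.ord_surj 1
  have hDϖ := h.derivation_uniformizer hn hϖ hq hDq
  have hmax (v : K) (hv : p.OrdGE v 1) : p.OrdGE (D v) (1 - n) := by
    have hw : p.OrdGE (ϖ⁻¹ * v) 0 :=
      ((OrdGE.rfl_ord p ϖ⁻¹).mul hv).mono (by rw [ord_inv, hϖ]; omega)
    rw [← mul_inv_cancel_left₀ hϖ0 v, D.leibniz, smul_eq_mul, smul_eq_mul]
    exact (((OrdGE.of_le hϖ.ge).mul (h _ hw)).mono (by omega)).add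
      ((hw.mul hDϖ).mono (by omega))
  intro y hy
  obtain ⟨f, -, hf, hfy⟩ := exists_irreducible_aeval_ordGE_one hff p hy
  obtain ⟨hf0, hf1⟩ := ord_aeval_derivative hf hy hfy
  have hDfy := hmax _ hfy
  rw [D.map_aeval, smul_eq_mul] at hDfy
  rw [← inv_mul_cancel_left₀ hf0 (D y)]
  exact ((OrdGE.rfl_ord p _).mul hDfy).mono (by rw [ord_inv, hf1]; omega)

theorem derivationBound_neg_one (hff : IsFunctionField F K) {q : K} (hq : p.ord q ≠ 0)
    (hDq : p.OrdGE (D q) (p.ord q)) : p.DerivationBound D (-1) := by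
  obtain ⟨n, hn⟩ := exists_derivationBound hff p D
  have hdesc (k : ℕ) : p.DerivationBound D (max (-1) (n - k)) := by
    induction k with
    | zero => exact fun y hy => (hn y hy).mono (by omega)
    | succ k ih =>
      rcases le_or_gt (n - k) (-1) with hle | hlt
      · exact fun y hy => (ih y hy).mono (by push_cast; omega)
      · exact fun y hy => (ih.pred hff (by omega) hq hDq y hy).mono (by push_cast; omega)
  exact fun y hy => (hdesc (n + 1).toNat y hy).mono (by omega)

theorem derivationBound_of_ordGE_mul (hff : IsFunctionField F K) {f q : K} (hf : f ≠ 0)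
    (hq : p.ord q ≠ 0) (hDq : p.OrdGE (f * D q) (p.ord q)) :
    p.DerivationBound D (p.ord f - 1) := fun y hy => by
  have h := derivationBound_neg_one (D := f • D) hff hq hDq y hy
  rw [Derivation.smul_apply, smul_eq_mul] at h
  rw [← inv_mul_cancel_left₀ hf (D y)]
  exact ((OrdGE.rfl_ord p f⁻¹).mul h).mono (by rw [ord_inv]; omega)

end FFPlace

section CanonicalDegree

variable [CharZero F] (hff : IsFunctionField F K) {t : K} {D : Derivation F K K}

include hff in
/-- Off the poles of `t`, apply `derivationBound_of_ordGE_mul` with `f = q = P(t)`, where `P(t)`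
vanishes at `p`; at a pole of `t`, with `f = t` and `q = t⁻¹`. -/
theorem exists_derivationBound_of_apply_eq_one (ht : Transcendental F t) (hDt : D t = 1)
    (p : FFPlace F K) :
    ∃ n, p.DerivationBound D n ∧ (p.ord t < 0 → n = p.ord t - 1) ∧
      (p.OrdGE t 0 → 0 ≤ n ∧
        ∃ P : F[X], P.Monic ∧ Irreducible P ∧ p.OrdGE (aeval t P) (n + 1)) := by
  have ht0 : t ≠ 0 := fun h0 => ht (h0 ▸ isAlgebraic_zero)
  by_cases hp : p.OrdGE t 0
  · obtain ⟨P, hmonic, hP, hPt⟩ := p.exists_irreducible_aeval_ordGE_one hff hp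
    have hPt0 : aeval t P ≠ 0 := fun h0 => hmonic.ne_zero (transcendental_iff.1 ht _ h0)
    have hord := hPt.le_ord hPt0
    refine ⟨p.ord (aeval t P) - 1,
      FFPlace.derivationBound_of_ordGE_mul hff hPt0 (q := aeval t P) (by omega) ?_,
      fun h => absurd (hp.le_ord ht0) (by omega), fun _ =>
      ⟨by omega, P, hmonic, hP, (FFPlace.OrdGE.rfl_ord p _).mono (by omega)⟩⟩
    rw [D.map_aeval, hDt, smul_eq_mul, mul_one]
    exact ((FFPlace.OrdGE.rfl_ord p _).mul (.aeval hp _)).mono (by omega)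
  · have hneg := (FFPlace.not_ordGE_iff.1 hp).2
    refine ⟨p.ord t - 1, FFPlace.derivationBound_of_ordGE_mul hff ht0 (q := t⁻¹)
      (by rw [FFPlace.ord_inv]; omega) ?_, fun _ => rfl, fun h => absurd h hp⟩
    have hDinv : t * D t⁻¹ = -t⁻¹ := by
      rw [D.leibniz_inv, hDt, smul_eq_mul]
      field_simp
    rw [hDinv]
    exact (FFPlace.OrdGE.rfl_ord p _).neg

/-- The differential dual to `D` has degree at most `2 g - 2`. -/
theorem exists_derivation_divisor (hff : IsFunctionField F K) (hcf : IsConstantField F K) {g : ℤ}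
    (hR : ∀ A : FFPlace F K →₀ ℤ, divDeg A - ellDim A + 1 ≤ g) :
    ∃ D : Derivation F K K, D ≠ 0 ∧ ∃ n : FFPlace F K → ℤ,
      (∀ p : FFPlace F K, p.DerivationBound D (n p)) ∧
      ∃ T₀ : Finset (FFPlace F K), ∀ T, T₀ ⊆ T → ∑ p ∈ T, n p * p.deg ≤ 2 * g - 2 := by
  classical
  obtain ⟨t, ht, _⟩ := id hff
  have ht0 : t ≠ 0 := fun h0 => ht (h0 ▸ isAlgebraic_zero)
  obtain ⟨D, hDt⟩ := exists_derivation_apply_eq_one ht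
  choose n hn hpole hreg using exists_derivationBound_of_apply_eq_one hff ht hDt
  refine ⟨D, fun h0 => by simp [h0] at hDt, n, hn, (zeroDiv t⁻¹).support, fun T hT => ?_⟩
  let A : FFPlace F K →₀ ℤ := zeroDiv t⁻¹
  have hA (p : FFPlace F K) : A p = max (-p.ord t) 0 := by
    rw [hff.zeroDiv_apply (inv_ne_zero ht0), FFPlace.ord_inv]
  let E : FFPlace F K →₀ ℤ := Finsupp.onFinset T (fun p => if p ∈ T then n p + 2 * A p else 0)
    fun p hp => by_contra fun h => hp (if_neg h)
  have hE (p : FFPlace F K) : E p = if p ∈ T then n p + 2 * A p else 0 := rfl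
  have hram : IsRamificationBound t E := by
    refine ⟨fun p hp => ?_, fun p hp => ?_⟩
    · obtain ⟨h0, P, hmonic, hP, hPt⟩ := hreg p hp
      have := hp.le_ord ht0
      refine ⟨P, hmonic, hP, hPt.mono ?_⟩
      rw [hE, hA]
      split_ifs <;> omega
    · have := hpole p hp
      rw [hE, hA]
      split_ifs <;> omega
  have hdeg := hram.divDeg_le hff hcf ht hR
  rw [divDeg_eq_sum E T fun p hp => by_contra fun h => hp (if_neg h),
    divDeg_eq_sum (zeroDiv t⁻¹) T fun p hp => hT (Finsupp.mem_support_iff.2 hp),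
    Finset.mul_sum] at hdeg
  have hsum : ∑ p ∈ T, E p * p.deg = ∑ p ∈ T, n p * p.deg + ∑ p ∈ T, 2 * (A p * p.deg) := by
    rw [← Finset.sum_add_distrib]
    refine Finset.sum_congr rfl fun p hp => ?_
    rw [hE, if_pos hp]
    ring
  linarith

end CanonicalDegree

section ShiftedPowers

namespace FFPlace

variable {p : FFPlace F K} {x y u v a ν : K} {i j : ℤ} {c d : F} {r : ℕ}

theorem OrdGE.pow_sub_pow (hx : p.OrdGE x j) (hy : p.OrdGE y j) (h : p.OrdGE (x - y) i) (m : ℕ) :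
    p.OrdGE (x ^ m - y ^ m) ((m - 1 : ℕ) * j + i) := by
  rw [← geom_sum₂_mul]
  refine OrdGE.mul (OrdGE.sum fun l hl => ?_) h
  have hl := Finset.mem_range.1 hl
  have hsplit : ((m - 1 : ℕ) : ℤ) = l + (m - 1 - l : ℕ) := by omega
  rw [hsplit, add_mul]
  exact (hx.pow l).mul (hy.pow _)

theorem OrdGE.of_pow (h : p.OrdGE (x ^ r) 1) : p.OrdGE x 1 := by
  contrapose! h
  obtain ⟨hx0, hx⟩ := not_ordGE_iff.1 h
  refine not_ordGE_iff.2 ⟨pow_ne_zero r hx0, ?_⟩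
  rw [ord_pow]
  nlinarith

theorem ord_pow_sub_pow [CharZero F] (hν : p.ord ν < 0) (hcd : c ≠ d) (hr : r ≠ 0) :
    (ν + algebraMap F K c) ^ r - (ν + algebraMap F K d) ^ r ≠ 0 ∧
    p.ord ((ν + algebraMap F K c) ^ r - (ν + algebraMap F K d) ^ r) = (r - 1) * p.ord ν := by
  obtain ⟨s, rfl⟩ := Nat.exists_eq_succ_of_ne_zero hr
  let q : F[X] := (X + C c) ^ (s + 1) - (X + C d) ^ (s + 1)
  have hcoeff : q.coeff s ≠ 0 := by
    simp only [q, coeff_sub, coeff_X_add_C_pow]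
    rw [Nat.add_sub_cancel_left, pow_one, pow_one, ← sub_mul, Nat.choose_succ_self_right]
    exact mul_ne_zero (sub_ne_zero.2 hcd) (Nat.cast_ne_zero.2 (Nat.succ_ne_zero s))
  have hdeg : q.natDegree = s := by
    refine natDegree_eq_of_le_of_coeff_ne_zero
      (natDegree_le_iff_coeff_eq_zero.2 fun N hN => ?_) hcoeff
    simp only [q, coeff_sub, coeff_X_add_C_pow]
    rw [Nat.sub_eq_zero_of_le hN, pow_zero, pow_zero, sub_self]
  have hord := ord_aeval_of_neg hν (fun h0 => hcoeff (by rw [h0, coeff_zero]) : q ≠ 0)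
  rw [hdeg] at hord
  simp only [q, map_sub, map_pow, map_add, aeval_X, aeval_C] at hord
  push_cast
  rwa [add_sub_cancel_right]

theorem ordGE_zero_of_pow_sub_pow [CharZero F] (hr : 2 ≤ r) (hcd : c ≠ d)
    (h : p.OrdGE ((ν + algebraMap F K c) ^ r - (ν + algebraMap F K d) ^ r) 0) : p.OrdGE ν 0 := by
  refine .of_le ?_
  by_contra! hν
  obtain ⟨hne, hord⟩ := ord_pow_sub_pow (p := p) (r := r) hν hcd (by omega)
  have hle := h.le_ord hne
  rw [hord] at hle
  have : (2 : ℤ) ≤ r := by exact_mod_cast hr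
  nlinarith

/-- The reason is the identity
`u ^ m * (u - v) = (u ^ (m + 1) - v ^ (m + 1)) - (u ^ m - v ^ m) * v`. -/
theorem not_ordGE_one_pow_sub_pow (hv : p.OrdGE v 0) (huv : ¬ p.OrdGE (u - v) 1) {m : ℕ}
    (h : p.OrdGE (u ^ (m + 1) - v ^ (m + 1)) 1) : ¬ p.OrdGE (u ^ m - v ^ m) 1 := by
  intro h'
  have hmul : p.OrdGE (u ^ m * (u - v)) 1 := by
    rw [show u ^ m * (u - v) = (u ^ (m + 1) - v ^ (m + 1)) - (u ^ m - v ^ m) * v by ring]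
    exact h.sub (by simpa using h'.mul hv)
  have hum : p.OrdGE (u ^ m) 1 := (ordGE_one_or_of_mul hmul).resolve_right huv
  have hvm : p.OrdGE (v ^ m) 1 := by simpa using hum.sub h'
  exact huv (hum.of_pow.sub hvm.of_pow)

/-- Lagrange interpolation of `(X + ν) ^ r - a` at `r + 1` constants at which it vanishes at `p`
would exhibit its leading coefficient `1` as an element vanishing at `p`. -/
theorem card_le_of_ordGE_one {ι : Type*} (hr : 0 < r) (s : Finset ι) {e : ι → F}
    (he : Set.InjOn e s) (h : ∀ i ∈ s, p.OrdGE ((ν + algebraMap F K (e i)) ^ r - a) 1) :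
    s.card ≤ r := by
  classical
  by_contra! hlt
  obtain ⟨t, hts, ht⟩ := Finset.exists_subset_card_eq (Nat.succ_le_of_lt hlt)
  have he' : Set.InjOn (fun i => algebraMap F K (e i)) t := fun i hi j hj hij =>
    he (hts hi) (hts hj) ((algebraMap F K).injective hij)
  let q : K[X] := (X + C ν) ^ r - C a
  have hX : ((X + C ν : K[X]) ^ r).degree = r := by rw [degree_pow, degree_X_add_C, nsmul_one]
  have hlt : (C a).degree < ((X + C ν : K[X]) ^ r).degree := by
    rw [hX]
    exact degree_C_le.trans_lt (by exact_mod_cast hr)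
  have hq : q.degree = r := by rw [degree_sub_eq_left_of_degree_lt hlt, hX]
  have hlc : q.leadingCoeff = 1 := by
    rw [leadingCoeff_sub_of_degree_lt hlt]
    exact (monic_X_add_C ν).pow r
  have hsum := Lagrange.leadingCoeff_eq_sum he' (P := q) (by rw [ht, hq]; rfl)
  rw [hlc] at hsum
  refine p.not_ordGE_one_one (hsum ▸ OrdGE.sum fun i hi => ?_)
  have heval : q.eval (algebraMap F K (e i)) = (ν + algebraMap F K (e i)) ^ r - a := by
    simp [q, add_comm]
  have hprod : (∏ j ∈ t.erase i, (algebraMap F K (e i) - algebraMap F K (e j)))⁻¹ =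
      algebraMap F K (∏ j ∈ t.erase i, (e i - e j))⁻¹ := by
    simp
  rw [div_eq_mul_inv, heval, hprod]
  exact ((h i (hts hi)).mul (OrdGE.algebraMap p _)).mono (by omega)

end FFPlace

end ShiftedPowers

section PoleBound

namespace FFPlace

variable {p : FFPlace F K} {a ν : K} {m : ℤ} {c d : F} {r : ℕ}

/-- The larger of the pole orders of `ν ^ r` and `a` at `p`, a common bound for the pole orders of
all `(ν + c) ^ r - a` with `c` constant. Summed over all places it is the height of the pair. -/
def poleBound (p : FFPlace F K) (r : ℕ) (ν a : K) : ℤ :=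
  max (r * max (-p.ord ν) 0) (max (-p.ord a) 0)

theorem poleBound_nonneg (p : FFPlace F K) (r : ℕ) (ν a : K) : 0 ≤ p.poleBound r ν a :=
  (le_max_right _ _).trans (le_max_right _ _)

theorem ordGE_neg_poleBound (p : FFPlace F K) (r : ℕ) (ν a : K) :
    p.OrdGE a (-p.poleBound r ν a) := by
  have hle : max (-p.ord a) 0 ≤ p.poleBound r ν a := le_max_right _ _
  exact .of_le (by omega)

theorem ordGE_add_algebraMap (p : FFPlace F K) (ν : K) (c : F) :
    p.OrdGE (ν + algebraMap F K c) (-max (-p.ord ν) 0) :=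
  (OrdGE.of_le (by omega)).add ((OrdGE.algebraMap p c).mono (by omega))

theorem ordGE_pow_neg_poleBound (p : FFPlace F K) (r : ℕ) (ν a : K) (c : F) :
    p.OrdGE ((ν + algebraMap F K c) ^ r) (-p.poleBound r ν a) := by
  have hle : r * max (-p.ord ν) 0 ≤ p.poleBound r ν a := le_max_left _ _
  exact ((p.ordGE_add_algebraMap ν c).pow r).mono (by linarith)

theorem exists_poleBound_pos [CharZero F] (hff : IsFunctionField F K)
    (hcf : IsConstantField F K) (hr : r ≠ 0)
    (hnc : ν ∉ (algebraMap F K).range ∨ a ∉ (algebraMap F K).range) :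
    ∃ p : FFPlace F K, 0 < p.poleBound r ν a := by
  rcases hnc with hν | ha
  · obtain ⟨p, hp⟩ := hff.exists_pole (y := ν) fun h => hν (hcf ν h)
    exact ⟨p, lt_max_of_lt_left (mul_pos (by omega) (lt_max_of_lt_left (by omega)))⟩
  · obtain ⟨p, hp⟩ := hff.exists_pole (y := a) fun h => ha (hcf a h)
    exact ⟨p, lt_max_of_lt_right (lt_max_of_lt_left (by omega))⟩

/-- If `a` has a larger pole than `ν ^ r`, there is no cancellation in `(ν + c) ^ r - a`; otherwise
subtracting the two elements leaves a pole of order `r - 1` times that of `ν`. -/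
theorem poleBound_le [CharZero F] (hr : 2 ≤ r) (hcd : c ≠ d) (hm : 0 ≤ m)
    (hc : p.OrdGE ((ν + algebraMap F K c) ^ r - a) (-m))
    (hd : p.OrdGE ((ν + algebraMap F K d) ^ r - a) (-m)) : p.poleBound r ν a ≤ 2 * m := by
  have hr' : (2 : ℤ) ≤ r := by exact_mod_cast hr
  rw [poleBound]
  by_cases hlt : r * max (-p.ord ν) 0 < -p.ord a
  · have hnn : 0 ≤ r * max (-p.ord ν) 0 := by positivity
    have ha : a ≠ 0 := ne_zero_of_ord_ne_zero (p := p) (by omega)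
    obtain ⟨hne, hord⟩ := ord_add_eq_of_lt (neg_ne_zero.2 ha)
      (((p.ordGE_add_algebraMap ν c).pow r).mono (by rw [p.ord_neg a ha]; linarith))
    rw [p.ord_neg a ha] at hord
    rw [sub_eq_neg_add] at hc
    have hle := hc.le_ord hne
    omega
  · rcases le_or_gt 0 (p.ord ν) with hν | hν
    · rw [max_eq_right (by omega : -p.ord ν ≤ 0)] at hlt ⊢
      omega
    · obtain ⟨hne, hord⟩ := ord_pow_sub_pow (p := p) hν hcd (r := r) (by omega)
      have hdiff := hc.sub hd
      rw [sub_sub_sub_cancel_right] at hdiff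
      have hle := hdiff.le_ord hne
      rw [hord] at hle
      rw [max_eq_left (by omega : 0 ≤ -p.ord ν)] at hlt ⊢
      have : (r : ℤ) * -p.ord ν ≤ 2 * m := by nlinarith
      omega

theorem card_sub_one_mul_poleBound_le [CharZero F] (p : FFPlace F K) {ι : Type*} (hr : 2 ≤ r)
    (s : Finset ι) {e : ι → F} (he : Set.InjOn e s) :
    ((s.card : ℤ) - 1) * p.poleBound r ν a ≤
      ∑ i ∈ s, 2 * max (-p.ord ((ν + algebraMap F K (e i)) ^ r - a)) 0 := by
  classical
  have hb := p.poleBound_nonneg r ν a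
  by_cases h : ∃ i ∈ s, 2 * max (-p.ord ((ν + algebraMap F K (e i)) ^ r - a)) 0 <
      p.poleBound r ν a
  · obtain ⟨i, hi, hlt⟩ := h
    have hother : ∀ j ∈ s.erase i, p.poleBound r ν a ≤
        2 * max (-p.ord ((ν + algebraMap F K (e j)) ^ r - a)) 0 := by
      intro j hj
      have hj := Finset.mem_erase.1 hj
      by_contra! hlt'
      have hle := poleBound_le (p := p) (ν := ν) (a := a)
        (m := max (max (-p.ord ((ν + algebraMap F K (e i)) ^ r - a)) 0)
          (max (-p.ord ((ν + algebraMap F K (e j)) ^ r - a)) 0)) hr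
        (fun h => hj.1 (he hj.2 hi h.symm)) (by omega) (.of_le (by omega)) (.of_le (by omega))
      omega
    have hcard := Finset.card_nsmul_le_sum _ _ _ hother
    rw [Finset.card_erase_of_mem hi, nsmul_eq_mul,
      Nat.cast_pred (Finset.card_pos.2 ⟨i, hi⟩)] at hcard
    exact hcard.trans (Finset.sum_le_sum_of_subset_of_nonneg (Finset.erase_subset i s)
      fun j _ _ => by positivity)
  · push Not at h
    have hcard := Finset.card_nsmul_le_sum _ _ _ h
    rw [nsmul_eq_mul] at hcard
    linarith

end FFPlace

end PoleBound

section Eliminant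

theorem derivation_add_algebraMap (D : Derivation F K K) (ν : K) (c : F) :
    D (ν + algebraMap F K c) = D ν := by
  rw [map_add, D.map_algebraMap, add_zero]

/-- The differential expression obtained by eliminating the constant `c` from `a = (ν + c) ^ r` and
`D a = r * (ν + c) ^ (r - 1) * D ν`. It vanishes when `a` is the `r`-th power of a translate of `ν`
by a constant. -/
def differentialEliminant (D : Derivation F K K) (r : ℕ) (ν a : K) : K :=
  (r : K) ^ r * a ^ (r - 1) * D ν ^ r - D a ^ r

variable {D : Derivation F K K} {u ν a : K} {r : ℕ}

theorem derivation_pow_pow (D : Derivation F K K) (u : K) (r : ℕ) :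
    D (u ^ r) ^ r = (r : K) ^ r * (u ^ r) ^ (r - 1) * D u ^ r := by
  rw [D.leibniz_pow, smul_eq_mul, nsmul_eq_mul]
  ring

theorem differentialEliminant_eq (hu : D u = D ν) :
    differentialEliminant D r ν a =
      (r : K) ^ r * D ν ^ r * (a ^ (r - 1) - (u ^ r) ^ (r - 1)) + (D (u ^ r) ^ r - D a ^ r) := by
  rw [differentialEliminant, derivation_pow_pow, hu]
  ring

theorem derivation_ne_zero_of_differentialEliminant_eq_zero [CharZero F]
    (hff : IsFunctionField F K) (hcf : IsConstantField F K) (hD : D ≠ 0) (hr : r ≠ 0) (ha : a ≠ 0)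
    (hnc : ν ∉ (algebraMap F K).range ∨ a ∉ (algebraMap F K).range)
    (h : differentialEliminant D r ν a = 0) : D ν ≠ 0 ∧ D a ≠ 0 := by
  have := charZero_of_injective_algebraMap (algebraMap F K).injective
  rw [differentialEliminant, sub_eq_zero] at h
  have hiff : D ν = 0 ↔ D a = 0 := by
    rw [← pow_eq_zero_iff hr, ← pow_eq_zero_iff hr (a := D a), ← h]
    simp [hr, ha]
  have hν : D ν ≠ 0 := fun hν => hnc.elim
    (fun h => h (mem_range_of_derivation_eq_zero hff hcf hD hν))
    (fun h => h (mem_range_of_derivation_eq_zero hff hcf hD (hiff.1 hν)))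
  exact ⟨hν, mt hiff.2 hν⟩

/-- The root is `β = r a Dν / Da`, as read off from `a = β ^ r` and `D a = r β ^ (r - 1) D ν`. -/
theorem exists_root_of_differentialEliminant_eq_zero [CharZero F] (hr : r ≠ 0) (ha : a ≠ 0)
    (hDa : D a ≠ 0) (h : differentialEliminant D r ν a = 0) : ∃ β, β ^ r = a ∧ D β = D ν := by
  have := charZero_of_injective_algebraMap (algebraMap F K).injective
  have hrK : (r : K) ≠ 0 := Nat.cast_ne_zero.2 hr
  let β := r * a * D ν / D a
  have hβ : β * D a = r * a * D ν := div_mul_cancel₀ _ hDa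
  have hβr : β ^ r = a := by
    rw [div_pow, div_eq_iff (pow_ne_zero _ hDa), ← sub_eq_zero.1 h, mul_pow, mul_pow,
      ← pow_sub_one_mul hr a]
    ring
  have hDβr : β * D a = r * a * D β := by
    rw [← hβr, D.leibniz_pow, smul_eq_mul, nsmul_eq_mul, ← pow_sub_one_mul hr β]
    ring
  exact ⟨β, hβr, mul_left_cancel₀ (mul_ne_zero hrK ha) (hDβr.symm.trans hβ)⟩

theorem exists_eq_pow_of_differentialEliminant_eq_zero [CharZero F]
    (hff : IsFunctionField F K) (hcf : IsConstantField F K) (hD : D ≠ 0) (hr : r ≠ 0) (ha : a ≠ 0)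
    (hDa : D a ≠ 0) (h : differentialEliminant D r ν a = 0) :
    ∃ κ : F, a = (ν + algebraMap F K κ) ^ r := by
  obtain ⟨β, hβr, hDβ⟩ := exists_root_of_differentialEliminant_eq_zero hr ha hDa h
  obtain ⟨κ, hκ⟩ := mem_range_of_derivation_eq_zero hff hcf hD (y := β - ν)
    (by rw [map_sub, hDβ, sub_self])
  exact ⟨κ, by rw [hκ, add_sub_cancel, hβr]⟩

end Eliminant

section Discriminating

namespace FFPlace

variable {p : FFPlace F K} {D : Derivation F K K} {a ν : K} {i k n : ℤ} {c κ : F} {r : ℕ}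

theorem DerivationBound.ordGE_neg (h : p.DerivationBound D n) (hk : 0 ≤ k) {y : K}
    (hy : p.OrdGE y (-k)) : p.OrdGE (D y) (-2 * k - n) := by
  rcases hk.eq_or_lt with rfl | hk
  · exact (h y hy).mono (by omega)
  · exact (h.ordGE hy).mono (by omega)

theorem DerivationBound.ordGE_pow (h : p.DerivationBound D n) (r : ℕ) (ν a : K) :
    p.OrdGE (D ν ^ r) (-(r * n) - 2 * p.poleBound r ν a) := by
  have hν : p.OrdGE ν (-max (-p.ord ν) 0) := .of_le (by omega)
  have hle : r * max (-p.ord ν) 0 ≤ p.poleBound r ν a := le_max_left _ _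
  exact ((h.ordGE_neg (le_max_right _ _) hν).pow r).mono (by linarith)

theorem DerivationBound.ordGE_differentialEliminant (h : p.DerivationBound D n) (hr : 1 ≤ r) :
    p.OrdGE (differentialEliminant D r ν a) (-(r * n) - 2 * r * p.poleBound r ν a) := by
  obtain ⟨s, rfl⟩ := Nat.exists_eq_add_of_le' hr
  have hb := p.poleBound_nonneg (s + 1) ν a
  have ha := p.ordGE_neg_poleBound (s + 1) ν a
  have hDa := (h.ordGE_neg hb ha).pow (s + 1)
  have hDν := h.ordGE_pow (s + 1) ν a
  have hsb := mul_nonneg (Int.natCast_nonneg s) hb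
  refine OrdGE.sub ?_ (hDa.mono (by push_cast; linarith))
  refine ((((OrdGE.natCast p _).pow _).mul (ha.pow _)).mul hDν).mono ?_
  push_cast [Nat.add_sub_cancel]
  linarith

/-- Modulo the equation `(ν + c) ^ r = a` the eliminant vanishes; a zero of order `i` of the
difference of the two sides makes it vanish to order almost `i`. -/
theorem DerivationBound.ordGE_differentialEliminant_of_ordGE (h : p.DerivationBound D n)
    (hr : 2 ≤ r) (hy : p.OrdGE ((ν + algebraMap F K c) ^ r - a) i) :
    p.OrdGE (differentialEliminant D r ν a) (i - 1 - r * n - 2 * r * p.poleBound r ν a) := by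
  obtain ⟨s, rfl⟩ := Nat.exists_eq_add_of_le' hr
  set b := p.poleBound (s + 2) ν a
  set U := (ν + algebraMap F K c) ^ (s + 2)
  have hb : 0 ≤ b := p.poleBound_nonneg (s + 2) ν a
  have hsb : 0 ≤ (s : ℤ) * b := by positivity
  have ha : p.OrdGE a (-b) := p.ordGE_neg_poleBound (s + 2) ν a
  have hU : p.OrdGE U (-b) := p.ordGE_pow_neg_poleBound (s + 2) ν a c
  have haU : p.OrdGE (a - U) i := by rw [← neg_sub]; exact hy.neg
  have hDUa : p.OrdGE (D U - D a) (i - 1 - n) := by rw [← map_sub]; exact h.ordGE hy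
  have hpow := ha.pow_sub_pow hU haU (s + 1)
  have hDpow := (h.ordGE_neg hb hU).pow_sub_pow (h.ordGE_neg hb ha) hDUa (s + 2)
  have hDν := h.ordGE_pow (s + 2) ν a
  rw [differentialEliminant_eq (derivation_add_algebraMap D ν c)]
  refine OrdGE.add (((((OrdGE.natCast p _).pow _).mul hDν).mul hpow).mono ?_) (hDpow.mono ?_)
  all_goals
    push_cast [Nat.add_sub_cancel, show s + 2 - 1 = s + 1 from rfl]
    linarith

/-- Write `u = ν + c` and `v = ν + κ`. Then `D (u ^ r - v ^ r) = r (u ^ (r - 1) - v ^ (r - 1)) D ν`,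
and the second factor is a unit at `p`. -/
theorem DerivationBound.ordGE_of_pow_sub_pow [CharZero F] (h : p.DerivationBound D n) (hr : 2 ≤ r)
    (hc : c ≠ κ) (hi : 1 ≤ i)
    (hy : p.OrdGE ((ν + algebraMap F K c) ^ r - (ν + algebraMap F K κ) ^ r) i) :
    p.OrdGE (D ν) (i - 1 - n) := by
  have hν : p.OrdGE ν 0 := ordGE_zero_of_pow_sub_pow hr hc (hy.mono (by omega))
  obtain ⟨s, rfl⟩ := Nat.exists_eq_add_of_le' hr
  set u := ν + algebraMap F K c with hu
  set v := ν + algebraMap F K κ with hv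
  have huv : ¬ p.OrdGE (u - v) 1 := by
    have hcκ : algebraMap F K (c - κ) ≠ 0 := (_root_.map_ne_zero _).2 (sub_ne_zero.2 hc)
    rw [hu, hv, add_sub_add_left_eq_sub, ← map_sub, ordGE_iff hcκ,
      p.ord_algebraMap _ (sub_ne_zero.2 hc)]
    omega
  have hw : ¬ p.OrdGE (u ^ (s + 1) - v ^ (s + 1)) 1 :=
    not_ordGE_one_pow_sub_pow (hν.add (.algebraMap p κ)) huv (hy.mono hi)
  obtain ⟨hw0, hwlt⟩ := not_ordGE_iff.1 hw
  have hwinv : p.OrdGE (u ^ (s + 1) - v ^ (s + 1))⁻¹ 0 := .of_le (by rw [ord_inv]; omega)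
  have hs : ((s + 2 : ℕ) : K) ≠ 0 := by
    have := charZero_of_injective_algebraMap (algebraMap F K).injective
    exact Nat.cast_ne_zero.2 (by omega)
  have hDν : D ν = algebraMap F K ((s + 2 : ℕ) : F)⁻¹ * (u ^ (s + 1) - v ^ (s + 1))⁻¹ *
      D (u ^ (s + 2) - v ^ (s + 2)) := by
    rw [map_sub, D.leibniz_pow, D.leibniz_pow, derivation_add_algebraMap,
      derivation_add_algebraMap, map_inv₀, map_natCast, show s + 2 - 1 = s + 1 from rfl]
    simp only [smul_eq_mul, nsmul_eq_mul]
    field_simp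
  rw [hDν]
  exact (((OrdGE.algebraMap p _).mul hwinv).mul (h.ordGE hy)).mono (by omega)

/-- Up to an error given by `n` and the poles of `ν` and `a`, the function `G` is regular at `p` and
vanishes there to the order of any nonzero `(ν + c) ^ r - a`, less one. -/
structure Discriminates (p : FFPlace F K) (n : ℤ) (r : ℕ) (ν a G : K) : Prop where
  ordGE : p.OrdGE G (-(r * n) - 2 * r * p.poleBound r ν a)
  ordGE_of_zero (c : F) : (ν + algebraMap F K c) ^ r - a ≠ 0 →
    1 ≤ p.ord ((ν + algebraMap F K c) ^ r - a) →
    p.OrdGE G (p.ord ((ν + algebraMap F K c) ^ r - a) - 1 - r * n - 2 * r * p.poleBound r ν a)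

theorem DerivationBound.discriminates_differentialEliminant (h : p.DerivationBound D n)
    (hr : 2 ≤ r) (ν a : K) : p.Discriminates n r ν a (differentialEliminant D r ν a) :=
  ⟨h.ordGE_differentialEliminant (by omega), fun _ _ _ =>
    h.ordGE_differentialEliminant_of_ordGE hr (.rfl_ord p _)⟩

theorem DerivationBound.discriminates_pow [CharZero F] (h : p.DerivationBound D n)
    (hr : 2 ≤ r) (ha : a = (ν + algebraMap F K κ) ^ r) : p.Discriminates n r ν a (D ν ^ r) := by
  have : (2 : ℤ) ≤ r := by exact_mod_cast hr
  have hb := p.poleBound_nonneg r ν a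
  refine ⟨(h.ordGE_pow r ν a).mono (by nlinarith), fun c hy0 hy => ?_⟩
  have hcκ : c ≠ κ := by
    rintro rfl
    exact hy0 (sub_eq_zero.2 ha.symm)
  have hDν : p.OrdGE (D ν) (p.ord ((ν + algebraMap F K c) ^ r - a) - 1 - n) := by
    refine h.ordGE_of_pow_sub_pow hr hcκ hy ?_
    rw [← ha]
    exact .rfl_ord p _
  exact (hDν.pow r).mono (by nlinarith)

end FFPlace

theorem exists_discriminates [CharZero F] (hff : IsFunctionField F K)
    (hcf : IsConstantField F K) {D : Derivation F K K} (hD : D ≠ 0) {n : FFPlace F K → ℤ}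
    (hn : ∀ p : FFPlace F K, p.DerivationBound D (n p)) {r : ℕ} (hr : 2 ≤ r) {a ν : K} (ha : a ≠ 0)
    (hnc : ν ∉ (algebraMap F K).range ∨ a ∉ (algebraMap F K).range) :
    ∃ G : K, G ≠ 0 ∧ ∀ p : FFPlace F K, p.Discriminates (n p) r ν a G := by
  by_cases hE : differentialEliminant D r ν a = 0
  · obtain ⟨hDν, hDa⟩ :=
      derivation_ne_zero_of_differentialEliminant_eq_zero hff hcf hD (by omega) ha hnc hE
    obtain ⟨κ, hκ⟩ :=
      exists_eq_pow_of_differentialEliminant_eq_zero hff hcf hD (by omega) ha hDa hE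
    exact ⟨D ν ^ r, pow_ne_zero r hDν, fun p => (hn p).discriminates_pow hr hκ⟩
  · exact ⟨_, hE, fun p => (hn p).discriminates_differentialEliminant hr ν a⟩

end Discriminating

section Counting

namespace FFPlace

variable {p : FFPlace F K} {a ν G : K} {n w : ℤ} {r : ℕ} {ι : Type*} {s : Finset ι} {e : ι → F}
  {x : ι → K}

/-- At most `r` of the powers vanish at `p`, and those that do have order at least `r ≥ 2`, so that
`ord - 1 ≤ w` forces `ord ≤ 2 w`. -/
theorem sum_zeros_le (hr : 2 ≤ r) (he : Set.InjOn e s)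
    (hx : ∀ i ∈ s, x i ^ r = (ν + algebraMap F K (e i)) ^ r - a) (hw : 0 ≤ w)
    (h : ∀ i ∈ s, 1 ≤ p.ord (x i ^ r) → p.ord (x i ^ r) - 1 ≤ w) :
    ∑ i ∈ s, max (p.ord (x i ^ r)) 0 ≤ 2 * r * w := by
  classical
  have : (2 : ℤ) ≤ r := by exact_mod_cast hr
  have hcard : (s.filter fun i => 1 ≤ p.ord (x i ^ r)).card ≤ r :=
    card_le_of_ordGE_one (p := p) (ν := ν) (a := a) (by omega) _
      (he.mono (Finset.coe_subset.2 (Finset.filter_subset _ _))) fun i hi => by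
        have hi := Finset.mem_filter.1 hi
        rw [← hx i hi.1]
        exact .of_le hi.2
  have hle : ∀ i ∈ s.filter fun i => 1 ≤ p.ord (x i ^ r), p.ord (x i ^ r) ≤ 2 * w := by
    intro i hi
    obtain ⟨his, hi⟩ := Finset.mem_filter.1 hi
    have hiw := h i his hi
    rw [ord_pow] at hi hiw ⊢
    have hpos : 0 < p.ord (x i) := pos_of_mul_pos_right (by omega) (by omega : (0 : ℤ) ≤ r)
    nlinarith
  calc ∑ i ∈ s, max (p.ord (x i ^ r)) 0
      = ∑ i ∈ s.filter fun i => 1 ≤ p.ord (x i ^ r), p.ord (x i ^ r) := by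
        rw [Finset.sum_filter]
        exact Finset.sum_congr rfl fun i _ => by split_ifs <;> omega
    _ ≤ (s.filter fun i => 1 ≤ p.ord (x i ^ r)).card * (2 * w) := by
        simpa using Finset.sum_le_card_nsmul _ _ _ hle
    _ ≤ r * (2 * w) := by gcongr
    _ = 2 * r * w := by ring

theorem Discriminates.card_sub_one_mul_poleBound_add_le [CharZero F]
    (h : p.Discriminates n r ν a G) (hG : G ≠ 0) (hr : 2 ≤ r) (he : Set.InjOn e s)
    (hx : ∀ i ∈ s, x i ^ r = (ν + algebraMap F K (e i)) ^ r - a) (hx0 : ∀ i ∈ s, x i ≠ 0) :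
    ((s.card : ℤ) - 1) * p.poleBound r ν a + 2 * ∑ i ∈ s, p.ord (x i ^ r) ≤
      4 * r * (p.ord G + r * n + 2 * r * p.poleBound r ν a) := by
  have hG0 := h.ordGE.le_ord hG
  have hzeros : ∑ i ∈ s, max (p.ord (x i ^ r)) 0 ≤
      2 * r * (p.ord G + r * n + 2 * r * p.poleBound r ν a) := by
    refine sum_zeros_le hr he hx (by linarith) fun i hi hi1 => ?_
    have hxi := pow_ne_zero r (hx0 i hi)
    rw [hx i hi] at hi1 hxi ⊢
    linarith [(h.ordGE_of_zero (e i) hxi hi1).le_ord hG]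
  have hpoles : ((s.card : ℤ) - 1) * p.poleBound r ν a ≤ ∑ i ∈ s, 2 * max (-p.ord (x i ^ r)) 0 :=
    (p.card_sub_one_mul_poleBound_le hr s he).trans_eq
      (Finset.sum_congr rfl fun i hi => by rw [hx i hi])
  have hsum : ∑ i ∈ s, 2 * max (-p.ord (x i ^ r)) 0 + 2 * ∑ i ∈ s, p.ord (x i ^ r) =
      2 * ∑ i ∈ s, max (p.ord (x i ^ r)) 0 := by
    rw [Finset.mul_sum, Finset.mul_sum, ← Finset.sum_add_distrib]
    exact Finset.sum_congr rfl fun i _ => by omega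
  linarith

end FFPlace

theorem exists_finset_sum_ord_mul_deg_eq_zero [CharZero F] (hff : IsFunctionField F K)
    (hcf : IsConstantField F K) {g : ℤ}
    (hR : ∀ A : FFPlace F K →₀ ℤ, divDeg A - ellDim A + 1 ≤ g) {ι : Type*} (s : Finset ι)
    {y : ι → K} (hy : ∀ i ∈ s, y i ≠ 0) :
    ∃ T₀ : Finset (FFPlace F K), ∀ T, T₀ ⊆ T → ∀ i ∈ s, ∑ p ∈ T, p.ord (y i) * p.deg = 0 := by
  have hfin : (⋃ i ∈ s, {p : FFPlace F K | p.ord (y i) ≠ 0}).Finite :=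
    s.finite_toSet.biUnion fun i hi => hff.finite_ord_ne_zero (hy i hi)
  refine ⟨hfin.toFinset, fun T hT i hi => sum_ord_mul_deg hff hcf hR (hy i hi) T fun p hp => hT ?_⟩
  exact hfin.mem_toFinset.2 (Set.mem_biUnion hi hp)

variable {a ν : K} {r : ℕ} {ι : Type*} {s : Finset ι} {e : ι → F} {x : ι → K}

/-- The zeros of `G` and the dual differential are summed over a set of places outside which all
functions in question have order zero, where the orders of each function cancel. -/
theorem exists_card_sub_one_mul_le [CharZero F] (hff : IsFunctionField F K)
    (hcf : IsConstantField F K) {g : ℤ}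
    (hR : ∀ A : FFPlace F K →₀ ℤ, divDeg A - ellDim A + 1 ≤ g) (hr : 2 ≤ r) (ha : a ≠ 0)
    (hnc : ν ∉ (algebraMap F K).range ∨ a ∉ (algebraMap F K).range) (he : Set.InjOn e s)
    (hx : ∀ i ∈ s, x i ^ r = (ν + algebraMap F K (e i)) ^ r - a) (hx0 : ∀ i ∈ s, x i ≠ 0) :
    ∃ H : ℤ, 1 ≤ H ∧ ((s.card : ℤ) - 1) * H ≤ 4 * r * (r * (2 * g - 2) + 2 * r * H) := by
  classical
  obtain ⟨D, hD, n, hDn, T₀, hn⟩ := exists_derivation_divisor hff hcf hR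
  obtain ⟨G, hG, hdisc⟩ := exists_discriminates hff hcf hD hDn hr ha hnc
  obtain ⟨p₀, hp₀⟩ := FFPlace.exists_poleBound_pos hff hcf (by omega : r ≠ 0) hnc
  obtain ⟨T₁, hT₁⟩ := exists_finset_sum_ord_mul_deg_eq_zero hff hcf hR s (y := fun i => x i ^ r)
    fun i hi => pow_ne_zero r (hx0 i hi)
  let T := insert p₀ (T₀ ∪ T₁ ∪ (hff.finite_ord_ne_zero hG).toFinset)
  have hTG := sum_ord_mul_deg hff hcf hR hG T fun p hp => by simp [T, hp]
  have hTx := hT₁ T fun p hp => by simp [T, hp]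
  have hTn := hn T fun p hp => by simp [T, hp]
  refine ⟨∑ p ∈ T, p.poleBound r ν a * p.deg, ?_, ?_⟩
  · have hpos : 0 < p₀.poleBound r ν a * p₀.deg :=
      mul_pos hp₀ (Int.natCast_pos.2 (FFPlace.deg_pos hff p₀))
    exact (Int.add_one_le_iff.2 hpos).trans
      (Finset.single_le_sum (f := fun p : FFPlace F K => p.poleBound r ν a * p.deg)
        (fun p _ => mul_nonneg (p.poleBound_nonneg r ν a) (Int.natCast_nonneg p.deg))
        (Finset.mem_insert_self p₀ _))
  · have hsum := Finset.sum_le_sum fun p (_ : p ∈ T) => mul_le_mul_of_nonneg_right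
      ((hdisc p).card_sub_one_mul_poleBound_add_le hG hr he hx hx0) (Int.natCast_nonneg p.deg)
    have hxsum : ∑ p ∈ T, (∑ i ∈ s, p.ord (x i ^ r)) * p.deg = 0 := by
      simp_rw [Finset.sum_mul]
      rw [Finset.sum_comm]
      exact Finset.sum_eq_zero hTx
    simp only [add_mul, mul_assoc, Finset.sum_add_distrib, ← Finset.mul_sum, mul_add] at hsum
    rw [hxsum, hTG] at hsum
    nlinarith [mul_le_mul_of_nonneg_left hTn (by positivity : (0 : ℤ) ≤ 4 * r * r)]

theorem card_le_of_pow_eq [CharZero F] (hff : IsFunctionField F K)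
    (hcf : IsConstantField F K) {g : ℕ}
    (hR : ∀ A : FFPlace F K →₀ ℤ, divDeg A - ellDim A + 1 ≤ g) (hr : 2 ≤ r) (ha : a ≠ 0)
    (hnc : ν ∉ (algebraMap F K).range ∨ a ∉ (algebraMap F K).range) (he : Set.InjOn e s)
    (hx : ∀ i ∈ s, x i ^ r = (ν + algebraMap F K (e i)) ^ r - a) (hx0 : ∀ i ∈ s, x i ≠ 0) :
    s.card ≤ 8 * r ^ 2 * (g + 1) + 1 := by
  obtain ⟨H, hH, hcard⟩ := exists_card_sub_one_mul_le hff hcf hR hr ha hnc he hx hx0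
  zify
  by_contra! hlt
  have hpos : 0 < (s.card : ℤ) - 1 - 8 * r ^ 2 := by nlinarith [sq_nonneg (r : ℤ)]
  have hle := mul_le_mul_of_nonneg_left hH hpos.le
  nlinarith [sq_nonneg (r : ℤ)]

theorem notMem_range_or_of_pow_eq (hcf : IsConstantField F K) {y : K} {c : F} (hr : r ≠ 0)
    (hy : y ∉ (algebraMap F K).range) (hpow : y ^ r = (ν + algebraMap F K c) ^ r - a) :
    ν ∉ (algebraMap F K).range ∨ a ∉ (algebraMap F K).range := by
  by_contra! h
  obtain ⟨⟨u, rfl⟩, ⟨b, rfl⟩⟩ := h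
  refine hy (hcf _ (IsAlgebraic.of_pow (n := r) (by omega) ?_))
  have hconst : y ^ r = algebraMap F K ((u + c) ^ r - b) := by
    rw [hpow, map_sub, map_pow, map_add]
  exact hconst ▸ isAlgebraic_algebraMap _

theorem hensley_rth_powers_function_field_char_zero_general [CharZero F]
    (hff : IsFunctionField F K) (hcf : IsConstantField F K) {g : ℕ} (hg : IsGenus F K g)
    (hr : 2 ≤ r) {M : ℕ} {c : ℕ → F} (hc : Set.InjOn c (Set.Iio M)) {x : ℕ → K}
    (hnc : ∃ i < M, x i ∉ (algebraMap F K).range)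
    (heq : ∀ n < M, x n ^ r = (ν + algebraMap F K (c n)) ^ r - a)
    (hM : 8 * r ^ 2 * (g + 1) + 1 + r < M) : a = 0 := by
  classical
  by_contra ha
  have hR : ∀ A : FFPlace F K →₀ ℤ, divDeg A - ellDim A + 1 ≤ g := fun A => hg.2 ⟨A, rfl⟩
  obtain ⟨i, hi, hxi⟩ := hnc
  have hνa := notMem_range_or_of_pow_eq hcf (by omega) hxi (heq i hi)
  obtain ⟨p, -⟩ := FFPlace.exists_poleBound_pos hff hcf (by omega : r ≠ 0) hνa
  have hsub (P : ℕ → Prop) [DecidablePred P] :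
      Set.InjOn c ((Finset.range M).filter P) ∧ ∀ n ∈ (Finset.range M).filter P, n < M :=
    ⟨hc.mono fun n hn => by simp_all, fun n hn => by simp_all⟩
  have hnonzero : ((Finset.range M).filter fun n => x n ≠ 0).card ≤ 8 * r ^ 2 * (g + 1) + 1 :=
    card_le_of_pow_eq hff hcf hR hr ha hνa (hsub _).1 (fun n hn => heq n ((hsub _).2 n hn))
      fun n hn => (Finset.mem_filter.1 hn).2
  have hzero : ((Finset.range M).filter fun n => ¬ x n ≠ 0).card ≤ r :=
    FFPlace.card_le_of_ordGE_one (p := p) (by omega) _ (hsub _).1 fun n hn => by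
      rw [← heq n ((hsub _).2 n hn), not_not.1 (Finset.mem_filter.1 hn).2, zero_pow (by omega)]
      exact .zero p 1
  have hcard := Finset.card_filter_add_card_filter_not (s := Finset.range M) (fun n => x n ≠ 0)
  rw [Finset.card_range] at hcard
  omega

theorem card_bound_lt_hensley_bound {r : ℚ} {g : ℚ} (hr : 2 ≤ r) (hg : 0 ≤ g) :
    8 * r ^ 2 * (g + 1) + 1 + r <
      (8 * r + 4 + 3 * r / (r - 1)) * (3 * r ^ 2) * g +
        (4 * r + 2 + 2 * r / (r - 1)) * (3 * r ^ 2) + 1 := by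
  have hβ₀ : 20 ≤ 8 * r + 4 + 3 * r / (r - 1) := by
    linarith [div_nonneg (by linarith : 0 ≤ 3 * r) (by linarith : 0 ≤ r - 1)]
  have hβ₁ : 10 ≤ 4 * r + 2 + 2 * r / (r - 1) := by
    linarith [div_nonneg (by linarith : 0 ≤ 2 * r) (by linarith : 0 ≤ r - 1)]
  calc 8 * r ^ 2 * (g + 1) + 1 + r < 20 * (3 * r ^ 2) * g + 10 * (3 * r ^ 2) + 1 := by
        nlinarith [mul_nonneg (sq_nonneg r) hg]
    _ ≤ _ := by gcongr

end Counting

/-- Hensley's problem for `r`-th powers over a function field `K` of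
genus `g` with field of constants `F` of characteristic zero, with the `c_n`
distinct rational numbers: if `M ≥ (8r+4+3r/(r-1))·3r²·g + (4r+2+2r/(r-1))·3r² + 1`
and `x_n^r = (ν + c_n)^r - a` for `0 ≤ n ≤ M-1` with some `x_i` non-constant,
then `a = 0`. -/
theorem hensley_rth_powers_function_field_char_zero
    (F K : Type) [Field F] [Field K] [Algebra F K] [CharZero F]
    (hff : IsFunctionField F K) (hcf : IsConstantField F K)
    (g : ℕ) (hg : IsGenus F K g)
    (r : ℕ) (hr : 2 ≤ r) (M : ℕ)
    (c : ℕ → ℚ) (hc : ∀ i j, i < M → j < M → c i = c j → i = j)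
    (a ν : K) (x : ℕ → K)
    (hnc : ∃ i, i < M ∧ x i ∉ (algebraMap F K).range)
    (heq : ∀ n, n < M → x n ^ r = (ν + ((c n : ℚ) : K)) ^ r - a)
    (hM : ((8 * r + 4 + 3 * r / (r - 1)) * (3 * r ^ 2) * g
        + (4 * r + 2 + 2 * r / (r - 1)) * (3 * r ^ 2) + 1 : ℚ) ≤ (M : ℚ)) :
    a = 0 := by
  refine hensley_rth_powers_function_field_char_zero_general hff hcf hg hr (c := fun n => (c n : F))
    (fun i hi j hj hij => hc i j hi hj (Rat.cast_injective hij)) hnc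
    (fun n hn => by rw [heq n hn, map_ratCast]) ?_
  exact_mod_cast (card_bound_lt_hensley_bound (by exact_mod_cast hr) g.cast_nonneg).trans_le hM
end
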